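/- arXiv:2605.14669 — 6 statements merged into one kernel-verified Lean document; each statement's English description precedes it below -/
import Mathlib

section
/- Fix real parameters α ≥ 1, a > −1, b > −1 and ε ∈ (0, π/2). Let (P_n)_{n≥0} be a sequence of real polynomials such that for every n: deg P_n = n, ∫_{−1}^{1} P_n(x)·(1−x)^{α·j}·(1−x)^a·(1+x)^b dx = 0 for j = 0, 1, …, n−1, this integral is nonzero for j = n, and P_n(1) = Γ(n + (a+1)/α) / (Γ(n+1)·Γ((a+1)/α)). Then there exists a constant C > 0 such that for all integers n ≥ 1 and all θ ∈ [ε, π−ε]: |P_n(x(θ))| ≤ C · n^{−1/2} · (sin((π−θ)/(1+α)) / sin((π−θ)/(1+1/α)))^n. -/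
open Real Filter Set MeasureTheory

/-- `Th α t = sin t / ((1+α)·sin((π−t)/(1+α)))`; `Th (1/α)` is `Θ_{1/α}`. -/
noncomputable def Th (α t : ℝ) : ℝ :=
  Real.sin t / ((1 + α) * Real.sin ((Real.pi - t) / (1 + α)))

/-- `xval α θ = 1 − 2·Θ_{1/α}(θ)·Θ_α(θ)^{1/α}`. -/
noncomputable def xval (α θ : ℝ) : ℝ :=
  1 - 2 * Th (1/α) θ * (Th α θ) ^ ((1:ℝ)/α)


/-- rising factorial -/
noncomputable def pa (n : ℕ) (t : ℝ) : ℝ := ∏ i ∈ Finset.range n, (t + i)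

lemma pa_zero (t : ℝ) : pa 0 t = 1 := by simp [pa]

lemma pa_succ (n : ℕ) (t : ℝ) : pa (n+1) t = pa n t * (t + n) := by
  simp [pa, Finset.prod_range_succ]

lemma pa_add (m k : ℕ) (t : ℝ) : pa (m + k) t = pa m t * pa k (t + m) := by
  simp [pa, Finset.prod_range_add, add_assoc]

lemma pa_pos (n : ℕ) {t : ℝ} (ht : 0 < t) : 0 < pa n t := by
  unfold pa; apply Finset.prod_pos; intro i _; positivity

lemma pa_choose (r : ℝ) (k : ℕ) : Ring.choose r k = pa k (r - k + 1) / k.factorial := by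
  have h : ∀ k : ℕ, (descPochhammer ℝ k).eval r = pa k (r - k + 1) := by
    intro k
    rw [descPochhammer_eval_eq_prod_range, pa, ← Finset.prod_range_reflect]
    apply Finset.prod_congr rfl
    intro i hi
    rw [Finset.mem_range] at hi
    have : ((k - 1 - i : ℕ) : ℝ) = k - 1 - i := by
      rw [Nat.sub_sub, Nat.cast_sub (by omega)]; push_cast; ring
    rw [this]; ring
  rw [Ring.choose_eq_smul, ← Polynomial.aeval_eq_smeval, Polynomial.aeval_def, ← Polynomial.eval_map, descPochhammer_map, h]
  simp [div_eq_inv_mul]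

lemma pa_neg (m j : ℕ) : pa m (-((m + j : ℕ):ℝ)) * j.factorial = (-1)^m * (m+j).factorial := by
  induction m generalizing j with
  | zero => simp [pa_zero]
  | succ m ih =>
    rw [pa_succ]
    have := ih (j+1)
    rw [Nat.factorial_succ] at this
    have e : m + 1 + j = m + (j+1) := by ring
    rw [e]
    push_cast at this ⊢
    rw [pow_succ]
    linear_combination (-1) * this

lemma pa_neg_zero (m k : ℕ) (h : k < m) : pa m (-(k:ℝ)) = 0 := by
  unfold pa
  exact Finset.prod_eq_zero (Finset.mem_range.2 h) (by simp)

lemma term_id (b : ℝ) (n m j : ℕ) (hm : m ≤ n) :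
    Ring.choose b j * (-1)^j * pa n (b+1) =
      (-1)^(m+j) * Ring.choose (n + b) (m+j) * pa m (-((m+j:ℕ):ℝ)) * pa (n-m) (b + 1 + m - (m+j:ℕ)) := by
  obtain ⟨l, rfl⟩ := Nat.exists_eq_add_of_le hm
  rw [pa_choose, pa_choose]
  have h1 := pa_neg m j
  have h2 : pa l (b+1-j) * pa (m+j) (b+1-j+l) = pa j (b+1-j) * pa (m+l) (b+1-j+j) := by
    rw [← pa_add, ← pa_add]; congr 1; ring
  have e0 : (m + l - m) = l := by omega
  have e1 : b + 1 + m - ((m+j:ℕ):ℝ) = b+1-j := by push_cast; ring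
  have e2 : ((m+l:ℕ):ℝ) + b - ((m+j:ℕ):ℝ) + 1 = b+1-j+l := by push_cast; ring
  have e3 : b - j + 1 = b+1-j := by ring
  rw [e0, e1, e2, e3]
  have e4 : b + 1 - j + j = b + 1 := by ring
  rw [e4] at h2
  have f1 : (j.factorial:ℝ) ≠ 0 := by positivity
  have f2 : ((m+j).factorial:ℝ) ≠ 0 := by positivity
  have h1' : pa m (-((m + j : ℕ):ℝ)) = (-1)^m * (m+j).factorial / j.factorial := by
    rw [eq_div_iff f1, h1]
  rw [h1']
  have s : (-1:ℝ)^(m+j) * (-1)^m = (-1)^j := by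
    rw [pow_add, mul_right_comm, ← mul_pow]; simp
  rw [← s]
  field_simp
  linear_combination (-1) * h2

lemma pa_Gamma (n : ℕ) {t : ℝ} (ht : 0 < t) : Real.Gamma (t + n) = pa n t * Real.Gamma t := by
  induction n with
  | zero => simp [pa_zero]
  | succ n ih =>
    rw [pa_succ]; push_cast
    rw [← add_assoc, Real.Gamma_add_one (by positivity), ih]; ring

lemma beta_int {p q : ℝ} (hp : 0 < p) (hq : 0 < q) :
    IntegrableOn (fun u : ℝ => u^(p-1) * (1-u)^(q-1)) (Ioo 0 1) ∧
    ∫ u in Ioo (0:ℝ) 1, u^(p-1) * (1-u)^(q-1) = Real.Gamma p * Real.Gamma q / Real.Gamma (p+q) := by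
  have h1 := Complex.betaIntegral_convergent (u := p) (v := q) (by simpa) (by simpa)
  rw [intervalIntegrable_iff_integrableOn_Ioo_of_le zero_le_one] at h1
  have h3 : EqOn (fun x : ℝ => (x:ℂ)^((p:ℂ)-1) * (1-(x:ℂ))^((q:ℂ)-1)) (fun u : ℝ => ((u^(p-1) * (1-u)^(q-1) : ℝ) : ℂ)) (Ioo 0 1) := by
    intro x hx
    have hx1 := hx.1
    have hx2 := hx.2
    simp only
    push_cast
    rw [Complex.ofReal_cpow hx1.le, Complex.ofReal_cpow (by linarith)]
    push_cast; rfl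
  have h4 := h1.congr_fun h3 measurableSet_Ioo
  refine ⟨?_, ?_⟩
  · have := h4.re
    simpa [IntegrableOn] using this
  · have h2 := ProbabilityTheory.beta_eq_betaIntegralReal p q hp hq
    rw [ProbabilityTheory.beta] at h2
    rw [h2, Complex.betaIntegral, intervalIntegral.integral_of_le zero_le_one, integral_Ioc_eq_integral_Ioo,
      setIntegral_congr_fun measurableSet_Ioo h3, integral_complex_ofReal, Complex.ofReal_re]


/-- polynomial rising factorial -/
noncomputable def pap (n : ℕ) (s : ℝ) : Polynomial ℝ :=
  ∏ i ∈ Finset.range n, (Polynomial.X + Polynomial.C (s + i))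

lemma pap_eval (n : ℕ) (s t : ℝ) : (pap n s).eval t = pa n (t + s) := by
  simp [pap, pa, Polynomial.eval_prod, add_assoc]

lemma pap_deg (n : ℕ) (s : ℝ) : (pap n s).natDegree ≤ n := by
  unfold pap
  refine (Polynomial.natDegree_prod_le _ _).trans ?_
  refine (Finset.sum_le_sum (fun i _ => (Polynomial.natDegree_X_add_C _).le)).trans ?_
  simp

lemma one_sub_rpow_hasSum (b u : ℝ) (hu : |u| < 1) :
    HasSum (fun j : ℕ => Ring.choose b j * (-u)^j) ((1-u)^b) := by
  have h := (Real.one_add_rpow_hasFPowerSeriesOnBall_zero (a := b)).hasSum (y := -u)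
    (by simp [enorm_eq_nnnorm]; rw [← NNReal.coe_lt_coe]; simpa using hu)
  simp only [binomialSeries_apply, zero_add, List.prod_ofFn, Finset.prod_const, Finset.card_univ, Fintype.card_fin, smul_eq_mul] at h
  rw [← sub_eq_add_neg] at h
  exact h

noncomputable def Qp (n : ℕ) (b : ℝ) (p : Polynomial ℝ) : Polynomial ℝ :=
  ∑ m ∈ Finset.range (n+1), Polynomial.C (p.coeff m) * (pap m 0 * pap (n-m) (b+1+m))

lemma Qp_eval (n : ℕ) (b : ℝ) (p : Polynomial ℝ) (t : ℝ) : (Qp n b p).eval t =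
    ∑ m ∈ Finset.range (n+1), p.coeff m * (pa m t * pa (n-m) (t+(b+1+m))) := by
  simp [Qp, Polynomial.eval_finsetSum, pap_eval]

lemma Qp_deg (n : ℕ) (b : ℝ) (p : Polynomial ℝ) : (Qp n b p).natDegree ≤ n := by
  unfold Qp
  apply Polynomial.natDegree_sum_le_of_forall_le
  intro m hm
  rw [Finset.mem_range] at hm
  refine (Polynomial.natDegree_C_mul_le _ _).trans ?_
  refine Polynomial.natDegree_mul_le.trans ?_
  have := pap_deg m 0
  have := pap_deg (n-m) (b+1+m)
  omega

lemma Qp_root (n : ℕ) (b t : ℝ) (hb : -1 < b) (ht : 0 < t) (p : Polynomial ℝ) (hp : p.natDegree ≤ n)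
    (h : ∫ u in Ioo (0:ℝ) 1, p.eval u * (u^(t-1) * (1-u)^b) = 0) : (Qp n b p).eval t = 0 := by
  have e : EqOn (fun u : ℝ => p.eval u * (u^(t-1) * (1-u)^b))
     (fun u => ∑ m ∈ Finset.range (n+1), p.coeff m * (u^((t+m)-1) * (1-u)^((b+1)-1))) (Ioo 0 1) := by
    intro u hu
    simp only
    rw [Polynomial.eval_eq_sum_range' (Nat.lt_succ_of_le hp), Finset.sum_mul]
    apply Finset.sum_congr rfl
    intro m _
    rw [show t + m - 1 = (t-1) + m by ring, Real.rpow_add hu.1, Real.rpow_natCast, add_sub_cancel_right]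
    ring
  have hm : ∀ m : ℕ, _ := fun m : ℕ => beta_int (p := t+m) (q := b+1) (by positivity) (by linarith)
  rw [setIntegral_congr_fun measurableSet_Ioo e, integral_finsetSum _ (fun m _ => ((hm m).1.const_mul _))] at h
  simp_rw [integral_const_mul, (hm _).2] at h
  rw [Qp_eval]
  have g1 : 0 < Real.Gamma (b+1) := Real.Gamma_pos_of_pos (by linarith)
  have g2 : 0 < Real.Gamma t := Real.Gamma_pos_of_pos (by linarith)
  have g3 : 0 < Real.Gamma (t+(b+1)+n) := Real.Gamma_pos_of_pos (by have : (0:ℝ) ≤ n := by positivity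
                                                                    linarith)
  have key : (∑ m ∈ Finset.range (n+1), p.coeff m * (pa m t * pa (n-m) (t+(b+1+m)))) * (Real.Gamma (b+1) * Real.Gamma t / Real.Gamma (t+(b+1)+n)) = 0 := by
    rw [← h, Finset.sum_mul]
    apply Finset.sum_congr rfl
    intro m hmn
    rw [Finset.mem_range] at hmn
    rw [pa_Gamma m ht]
    have h5 := pa_Gamma (n-m) (t := t+(b+1+m)) (by have : (0:ℝ) ≤ m := by positivity
                                                   linarith)
    rw [Nat.cast_sub (by omega), show t+(b+1+m) + ((n:ℝ)-m) = t+(b+1)+n by ring] at h5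
    have g4 : 0 < Real.Gamma (t+(b+1+m)) := Real.Gamma_pos_of_pos (by have : (0:ℝ) ≤ m := by positivity
                                                                      linarith)
    rw [show t + m + (b+1) = t+(b+1+m) by ring]
    rw [mul_div_assoc', mul_div_assoc', div_eq_div_iff g3.ne' g4.ne', h5]
    ring
  rcases mul_eq_zero.1 key with h | h
  · exact h
  · exact absurd h (by positivity)

lemma Qp_val (α a b : ℝ) (hα : 0 < α) (ha : -1 < a) (hb : -1 < b) (n : ℕ) (p : Polynomial ℝ)
    (hp : p.natDegree ≤ n)
    (h : ∀ j < n, ∫ u in Ioo (0:ℝ) 1, p.eval u * (u^(a+1+α*j-1) * (1-u)^b) = 0)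
    (h0 : p.coeff 0 = pa n ((a+1)/α) / n.factorial) (k : ℕ) :
    (Qp n b p).eval (-(k:ℝ)) = pa n (b+1) * (pa n ((a+1+k)/α) / n.factorial) := by
  set R : Polynomial ℝ := ∏ j ∈ Finset.range n, (Polynomial.X - Polynomial.C (a+1+α*j)) with hR
  have hRd : R.natDegree ≤ n := by
    refine (Polynomial.natDegree_prod_le _ _).trans ?_
    refine (Finset.sum_le_sum (fun i _ => (Polynomial.natDegree_X_sub_C _).le)).trans ?_
    simp
  have hRe : ∀ k : ℕ, R.eval (-(k:ℝ)) = (-α)^n * pa n ((a+1+k)/α) := by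
    intro k
    have hc : (-α)^n = ∏ i ∈ Finset.range n, (-α) := by simp
    rw [hR, Polynomial.eval_prod, pa, hc, ← Finset.prod_mul_distrib]
    apply Finset.prod_congr rfl
    intro i _
    simp; field_simp; ring
  have hRz : ∀ j < n, R.eval (a+1+α*j) = 0 := by
    intro j hj
    rw [hR, Polynomial.eval_prod]
    exact Finset.prod_eq_zero (Finset.mem_range.2 hj) (by simp)
  have hQ0 : (Qp n b p).eval 0 = p.coeff 0 * pa n (b+1) := by
    rw [Qp_eval, Finset.sum_eq_single 0]
    · simp [pa_zero]
    · intro m _ hm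
      have := pa_neg_zero m 0 (by omega)
      simp at this
      simp [this]
    · simp
  set F := Polynomial.C (R.eval 0) * Qp n b p - Polynomial.C ((Qp n b p).eval 0) * R with hF
  have hFd : F.natDegree ≤ n := by
    refine (Polynomial.natDegree_sub_le _ _).trans (max_le ?_ ?_)
    · exact (Polynomial.natDegree_C_mul_le _ _).trans (Qp_deg _ _ _)
    · exact (Polynomial.natDegree_C_mul_le _ _).trans hRd
  have hF0 : F = 0 := by
    refine Polynomial.eq_zero_of_natDegree_lt_card_of_eval_eq_zero (ι := Option (Fin n)) F
      (f := fun o => match o with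
        | none => 0
        | some j => a+1+α*((j:ℕ):ℝ)) ?_ ?_ ?_
    · have pos : ∀ j : ℕ, 0 < a + 1 + α * j := fun j => by
        have : 0 ≤ α * j := by positivity
        linarith
      rintro (_|i) (_|j) hij
      · rfl
      · exact absurd hij (pos j).ne
      · exact absurd hij (pos i).ne'
      · simp only [add_right_inj, mul_eq_mul_left_iff, Nat.cast_inj, hα.ne', or_false] at hij
        rw [Fin.ext hij]
    · rintro (_|j)
      · simp [hF]; ring
      · simp only [hF, Polynomial.eval_sub, Polynomial.eval_mul, Polynomial.eval_C, hRz j j.2, mul_zero, sub_zero]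
        rw [Qp_root n b _ hb _ p hp (h j j.2), mul_zero]
        have : 0 ≤ α * (j:ℕ) := by positivity
        linarith
    · simpa using Nat.lt_succ_of_le hFd
  have h1 : F.eval (-(k:ℝ)) = 0 := by rw [hF0]; simp
  have hR0 := hRe 0
  simp only [Nat.cast_zero, neg_zero, add_zero] at hR0
  simp only [hF, Polynomial.eval_sub, Polynomial.eval_mul, Polynomial.eval_C, hRe k, hR0, hQ0, h0] at h1
  have z : (-α)^n * pa n ((a+1)/α) ≠ 0 :=
    mul_ne_zero (pow_ne_zero _ (by linarith)) (pa_pos n (div_pos (by linarith) hα)).ne'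
  apply mul_left_cancel₀ z
  linear_combination h1

lemma series (α a b : ℝ) (hα : 0 < α) (ha : -1 < a) (hb : -1 < b) (n : ℕ) (p : Polynomial ℝ)
    (hp : p.natDegree ≤ n)
    (h : ∀ j < n, ∫ u in Ioo (0:ℝ) 1, p.eval u * (u^(a+1+α*j-1) * (1-u)^b) = 0)
    (h0 : p.coeff 0 = pa n ((a+1)/α) / n.factorial) (u : ℝ) (hu : |u| < 1) :
    HasSum (fun k : ℕ => Ring.choose (n + b) k * (-u)^k * (pa n ((a+1+k)/α) / n.factorial))
      (p.eval u * (1-u)^b) := by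
  have h1 : ∀ m ∈ Finset.range (n+1), HasSum (fun k : ℕ => if m ≤ k then
      p.coeff m * u^m * (Ring.choose b (k-m) * (-u)^(k-m)) else 0) (p.coeff m * u^m * (1-u)^b) := by
    intro m _
    have := (one_sub_rpow_hasSum b u hu).mul_left (p.coeff m * u^m)
    rw [← (add_right_injective m).hasSum_iff]
    · simpa [Function.comp_def] using this
    · intro k hk
      rw [if_neg]
      intro hmk
      exact hk ⟨k-m, by simp; omega⟩
  have h2 := hasSum_sum h1
  rw [← Finset.sum_mul, ← Polynomial.eval_eq_sum_range' (Nat.lt_succ_of_le hp)] at h2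
  convert h2 using 2 with k
  have z : pa n (b+1) ≠ 0 := (pa_pos n (by linarith)).ne'
  apply mul_right_cancel₀ z
  have h3 := Qp_val α a b hα ha hb n p hp h h0 k
  rw [mul_assoc, mul_comm (_ / _) (pa n (b+1)), ← h3, Qp_eval, Finset.mul_sum, Finset.sum_mul]
  apply Finset.sum_congr rfl
  intro m hm
  rw [Finset.mem_range] at hm
  split_ifs with hmk
  · obtain ⟨j, rfl⟩ := Nat.exists_eq_add_of_le hmk
    have := term_id b n m j (by omega)
    rw [show -((m+j:ℕ):ℝ) + (b+1+m) = b + 1 + m - (m+j:ℕ) by ring, Nat.add_sub_cancel_left]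
    rw [neg_pow u (m+j), neg_pow u j, pow_add u]
    linear_combination (-1) * p.coeff m * u^m * u^j * this
  · rw [pa_neg_zero m k (by omega)]; ring


lemma subst_int (f : ℝ → ℝ) : ∫ x in Ioo (-1:ℝ) 1, f x = 2 * ∫ u in Ioo (0:ℝ) 1, f (1 - 2*u) := by
  have h := intervalIntegral.integral_comp_sub_mul (a := 0) (b := 1) f (c := (2:ℝ)) (by norm_num) 1
  rw [intervalIntegral.integral_of_le (by norm_num), intervalIntegral.integral_of_le (by norm_num),
    integral_Ioc_eq_integral_Ioo, integral_Ioc_eq_integral_Ioo] at h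
  rw [h]
  norm_num
  ring

lemma seriesP (α a b : ℝ) (hα : 0 < α) (ha : -1 < a) (hb : -1 < b) (n : ℕ) (P : Polynomial ℝ)
    (hdeg : P.natDegree = n)
    (horth : ∀ j < n,
      ∫ x in Set.Ioo (-1:ℝ) 1,
        P.eval x * (1 - x) ^ (α * (j:ℝ)) * (1 - x) ^ a * (1 + x) ^ b = 0)
    (hnorm : P.eval 1 =
      Real.Gamma (n + (a+1)/α) / (Real.Gamma (n+1) * Real.Gamma ((a+1)/α))) (u : ℝ) (hu : |u| < 1) :
    HasSum (fun k : ℕ => Ring.choose (n + b) k * (-u)^k * (pa n ((a+1+k)/α) / n.factorial))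
      (P.eval (1-2*u) * (1-u)^b) := by
  set p := P.comp (1 - 2 * Polynomial.X) with hp
  have ev : ∀ u, p.eval u = P.eval (1-2*u) := by
    intro u; simp [hp]
  have hk : 0 < (a+1)/α := div_pos (by linarith) hα
  rw [← ev]
  apply series α a b hα ha hb n p _ _ _ u hu
  · rw [hp, Polynomial.natDegree_comp, hdeg]
    have : (1 - 2 * Polynomial.X : Polynomial ℝ).natDegree ≤ 1 := by
      compute_degree
    nlinarith
  · intro j hj
    have h := horth j hj
    rw [subst_int] at h
    have e : EqOn (fun u : ℝ => P.eval (1-2*u) * (1 - (1-2*u)) ^ (α * (j:ℝ)) * (1 - (1-2*u)) ^ a * (1 + (1-2*u)) ^ b)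
       (fun u => (2^(α*j) * 2^a * 2^b) * (p.eval u * (u^(a+1+α*j-1) * (1-u)^b))) (Ioo 0 1) := by
      intro u hu
      have h1 := hu.1
      have h2 : 0 < 1 - u := by linarith [hu.2]
      simp only
      rw [ev, show 1 - (1-2*u) = 2*u by ring, show 1 + (1-2*u) = 2 * (1-u) by ring,
        Real.mul_rpow (by norm_num) h1.le, Real.mul_rpow (by norm_num) h1.le, Real.mul_rpow (by norm_num) h2.le,
        show a+1+α*j-1 = α*j + a by ring, Real.rpow_add h1]
      ring
    rw [setIntegral_congr_fun measurableSet_Ioo e, integral_const_mul] at h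
    have : (2:ℝ) * (2^(α*j) * 2^a * 2^b) ≠ 0 := by positivity
    rw [← mul_assoc] at h
    exact (mul_eq_zero.1 h).resolve_left this
  · rw [Polynomial.coeff_zero_eq_eval_zero, ev]
    simp only [mul_zero, sub_zero]
    rw [hnorm, add_comm (n:ℝ), pa_Gamma n hk, Real.Gamma_nat_eq_factorial]
    have := (Real.Gamma_pos_of_pos hk).ne'
    field_simp


lemma anti_helper {f f' : ℝ → ℝ} {x y : ℝ} (hxy : x ≤ y) (h : ∀ s ∈ Icc x y, HasDerivAt f (f' s) s)
    (h' : ∀ s ∈ Ioo x y, f' s ≤ 0) : f y ≤ f x := by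
  refine antitoneOn_of_deriv_nonpos (convex_Icc x y) (fun s hs => (h s hs).continuousAt.continuousWithinAt) ?_ ?_
    (left_mem_Icc.2 hxy) (right_mem_Icc.2 hxy) hxy
  · intro s hs
    rw [interior_Icc] at hs
    exact (h s (Ioo_subset_Icc_self hs)).differentiableAt.differentiableWithinAt
  · intro s hs
    rw [interior_Icc] at hs
    rw [(h s (Ioo_subset_Icc_self hs)).deriv]
    exact h' s hs

lemma mono_helper {f f' : ℝ → ℝ} {x y : ℝ} (hxy : x ≤ y) (h : ∀ s ∈ Icc x y, HasDerivAt f (f' s) s)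
    (h' : ∀ s ∈ Ioo x y, 0 ≤ f' s) : f x ≤ f y := by
  have := anti_helper (f := fun s => - f s) (f' := fun s => - f' s) hxy (fun s hs => (h s hs).neg)
    (fun s hs => by simpa using h' s hs)
  simpa using this

lemma cos_mul_le_rpow (g s : ℝ) (hg1 : 1 ≤ g) (hg2 : g ≤ 2) (hs0 : 0 ≤ s) (hs : s < π/2) :
    cos (g*s) ≤ (cos s)^g := by
  have cpos : ∀ x ∈ Icc 0 s, 0 < cos x := fun x hx =>
    cos_pos_of_mem_Ioo ⟨by linarith [hx.1, pi_pos], by linarith [hx.2]⟩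
  have h := anti_helper (f := fun x => cos (g*x) * (cos x)^(-g))
    (f' := fun x => -(g * (cos x)^(-g-1) * sin ((g-1)*x))) hs0 ?_ ?_
  · simp only [mul_zero, cos_zero, one_rpow, mul_one] at h
    have c := cpos s ⟨hs0, le_rfl⟩
    rw [rpow_neg c.le, ← div_eq_mul_inv, div_le_one (rpow_pos_of_pos c _)] at h
    exact h
  · intro x hx
    have c := cpos x hx
    have h1 : HasDerivAt (fun x => cos (g*x)) (-sin (g*x) * g) x := by
      simpa using ((hasDerivAt_id x).const_mul g).cos
    have h2 := (hasDerivAt_cos x).rpow_const (p := -g) (Or.inl c.ne')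
    refine (h1.mul h2).congr_deriv ?_
    rw [show (g-1)*x = g*x - x by ring, sin_sub]
    have e : (cos x)^(-g) = (cos x)^(-g-1) * cos x := by
      rw [← rpow_add_one c.ne']; congr 1; ring
    simp only [e]
    ring
  · intro x hx
    have c := cpos x (Ioo_subset_Icc_self hx)
    have : 0 ≤ sin ((g-1)*x) := sin_nonneg_of_nonneg_of_le_pi (mul_nonneg (by linarith) hx.1.le) (by
      have : (g-1)*x ≤ 1 * x := mul_le_mul_of_nonneg_right (by linarith) hx.1.le
      linarith [hx.2, pi_pos])
    have := rpow_pos_of_pos c (-g-1)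
    have : 0 ≤ g * (cos x)^(-g-1) * sin ((g-1)*x) := by positivity
    linarith

lemma cpow_re_le (g : ℝ) (hg1 : 1 ≤ g) (hg2 : g ≤ 2) (V : ℂ) (hV : 0 < V.re) :
    (V^(g:ℂ)).re ≤ V.re^g := by
  rw [Complex.cpow_ofReal_re, ← Complex.norm_mul_cos_arg V]
  have h1 := Complex.abs_arg_lt_pi_div_two_iff.2 (Or.inl hV)
  have hc : 0 ≤ cos (Complex.arg V) := by
    apply cos_nonneg_of_mem_Icc
    rw [abs_lt] at h1
    exact ⟨h1.1.le, h1.2.le⟩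
  rw [mul_rpow (norm_nonneg _) hc]
  apply mul_le_mul_of_nonneg_left _ (by positivity)
  have := cos_mul_le_rpow g |Complex.arg V| hg1 hg2 (abs_nonneg _) h1
  rw [cos_abs] at this
  rwa [← cos_abs, abs_mul, abs_of_nonneg (by linarith : 0 ≤ g), mul_comm]

lemma one_sub_cpow_norm_ge (g : ℝ) (hg1 : 1 ≤ g) (hg2 : g ≤ 2) (V : ℂ) (hV : 0 < V.re) (hV1 : V.re < 1) :
    (1 - V.re^g)/2 * ‖V‖^g ≤ ‖1 - V^(g:ℂ)‖ ∧ 0 < 1 - V.re^g := by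
  have h1 : 0 < 1 - V.re^g := by
    have := rpow_lt_one hV.le hV1 (by linarith : 0 < g)
    linarith
  have h2 : 1 - V.re^g ≤ ‖1 - V^(g:ℂ)‖ := by
    have := cpow_re_le g hg1 hg2 V hV
    have h3 := Complex.re_le_norm (1 - V^(g:ℂ))
    simp only [Complex.sub_re, Complex.one_re] at h3
    linarith
  refine ⟨?_, h1⟩
  have h4 : ‖V‖^g - 1 ≤ ‖1 - V^(g:ℂ)‖ := by
    have := norm_sub_norm_le (V^(g:ℂ)) 1
    rw [Complex.norm_cpow_real, norm_sub_rev] at this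
    simpa using this
  have h5 : 0 ≤ V.re^g := by positivity
  by_cases h : ‖V‖^g ≤ 2
  · nlinarith
  · push Not at h
    nlinarith

lemma Vre (c τ : ℝ) : ((c:ℂ) + τ * Complex.I).re = c := by simp

lemma Vne {V : ℂ} (hV : 0 < V.re) : V ≠ 0 := by
  rintro rfl; simp at hV

lemma Vslit {V : ℂ} (hV : 0 < V.re) : V ∈ Complex.slitPlane := Or.inl hV

lemma Vnormsq (c τ : ℝ) : ‖(c:ℂ) + τ * Complex.I‖^2 = c^2 + τ^2 := by
  rw [Complex.sq_norm, Complex.normSq_add_mul_I]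

lemma Vnorm_ge (c τ : ℝ) (hc : 0 < c) : c ≤ ‖(c:ℂ) + τ * Complex.I‖ := by
  have := Complex.re_le_norm ((c:ℂ) + τ * Complex.I)
  rwa [Vre] at this

lemma Vint (c δ : ℝ) (hc : 0 < c) (hδ : 0 < δ) :
    Integrable (fun τ : ℝ => ‖(c:ℂ) + τ * Complex.I‖^(-(1+δ))) := by
  have h := integrable_rpow_neg_one_add_norm_sq (E := ℝ) (μ := volume) (r := 1+δ) (by simp [hδ])
  set m := min (c^2) 1 with hm
  have hm0 : 0 < m := lt_min (by positivity) one_pos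
  refine (h.const_mul (m^(-(1+δ)/2))).mono' ?_ ?_
  · apply Continuous.aestronglyMeasurable
    apply Continuous.rpow_const (by fun_prop)
    intro x; left
    have := Vnorm_ge c x hc
    linarith
  · refine Eventually.of_forall fun τ => ?_
    have hn : 0 ≤ ‖(c:ℂ) + τ * Complex.I‖ := norm_nonneg _
    rw [Real.norm_of_nonneg (by positivity)]
    rw [← mul_rpow hm0.le (by positivity)]
    have e : ‖(c:ℂ) + τ * Complex.I‖^(-(1+δ)) = (‖(c:ℂ) + τ * Complex.I‖^2)^(-(1+δ)/2) := by
      rw [← rpow_natCast, ← rpow_mul hn]; congr 1; push_cast; ring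
    rw [e, Vnormsq]
    apply rpow_le_rpow_of_nonpos (by positivity)
    · rw [Real.norm_eq_abs, sq_abs]
      have := min_le_left (c^2) 1
      have := min_le_right (c^2) 1
      nlinarith [sq_nonneg τ]
    · linarith

lemma Vtop (c : ℝ) : Tendsto (fun τ : ℝ => ‖(c:ℂ) + τ * Complex.I‖) atTop atTop ∧
    Tendsto (fun τ : ℝ => ‖(c:ℂ) + τ * Complex.I‖) atBot atTop := by
  have h : ∀ τ : ℝ, |τ| ≤ ‖(c:ℂ) + τ * Complex.I‖ := by
    intro τ
    have := Complex.abs_im_le_norm ((c:ℂ) + τ * Complex.I)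
    simpa using this
  exact ⟨tendsto_atTop_mono h tendsto_abs_atTop_atTop, tendsto_atTop_mono h tendsto_abs_atBot_atTop⟩


/-- the contour integrand -/
noncomputable def Jf (g κ : ℝ) (n : ℕ) (V : ℂ) : ℂ :=
  g * V^((g-1-g*κ : ℝ):ℂ) * ((1 - V^(g:ℂ))^(n+1))⁻¹

lemma Vcpow_cont (c r : ℝ) (hc : 0 < c) : Continuous (fun τ : ℝ => ((c:ℂ) + τ * Complex.I)^(r:ℂ)) := by
  refine continuous_iff_continuousAt.2 fun τ => ?_
  exact ContinuousAt.cpow (by fun_prop) continuousAt_const (Vslit (by rw [Vre]; exact hc))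

lemma one_sub_ne (g c : ℝ) (hg1 : 1 ≤ g) (hg2 : g ≤ 2) (hc : 0 < c) (hc1 : c < 1) (τ : ℝ) :
    1 - ((c:ℂ) + τ * Complex.I)^(g:ℂ) ≠ 0 := by
  have h := one_sub_cpow_norm_ge g hg1 hg2 ((c:ℂ) + τ * Complex.I) (by rwa [Vre]) (by rwa [Vre])
  have hn : 0 < ‖(c:ℂ) + τ * Complex.I‖ := by linarith [Vnorm_ge c τ hc]
  have := rpow_pos_of_pos hn g
  rw [← norm_pos_iff]
  refine lt_of_lt_of_le ?_ h.1
  have := h.2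
  positivity

lemma Jf_cont (g κ c : ℝ) (n : ℕ) (hg1 : 1 ≤ g) (hg2 : g ≤ 2) (hc : 0 < c) (hc1 : c < 1) :
    Continuous (fun τ : ℝ => Jf g κ n ((c:ℂ) + τ * Complex.I)) := by
  unfold Jf
  have h1 := Vcpow_cont c (g-1-g*κ) hc
  have h2 := Vcpow_cont c g hc
  refine (continuous_const.mul h1).mul (((continuous_const.sub h2).pow _).inv₀ ?_)
  intro τ
  exact pow_ne_zero _ (one_sub_ne g c hg1 hg2 hc hc1 τ)

lemma inv_pow_bound (g c : ℝ) (n : ℕ) (hg1 : 1 ≤ g) (hg2 : g ≤ 2) (hc : 0 < c) (hc1 : c < 1) (τ : ℝ) :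
    ‖((1 - ((c:ℂ) + τ * Complex.I)^(g:ℂ))^n)⁻¹‖ ≤ (((1 - c^g)/2)^n)⁻¹ * ‖(c:ℂ) + τ * Complex.I‖^(-(g*n)) := by
  have h := one_sub_cpow_norm_ge g hg1 hg2 ((c:ℂ) + τ * Complex.I) (by rwa [Vre]) (by rwa [Vre])
  rw [Vre] at h
  have hn : 0 < ‖(c:ℂ) + τ * Complex.I‖ := by linarith [Vnorm_ge c τ hc]
  rw [norm_inv, norm_pow, rpow_neg hn.le, ← mul_inv, rpow_mul hn.le, rpow_natCast, ← mul_pow]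
  have h2 : 0 < (1 - c^g)/2 := by linarith [h.2]
  have := rpow_pos_of_pos hn g
  apply inv_anti₀ (by positivity)
  exact pow_le_pow_left₀ (by positivity) h.1 n

lemma Jf_bound (g κ c : ℝ) (n : ℕ) (hg1 : 1 ≤ g) (hg2 : g ≤ 2) (hc : 0 < c) (hc1 : c < 1) (τ : ℝ) :
    ‖Jf g κ n ((c:ℂ) + τ * Complex.I)‖ ≤
      g * (((1 - c^g)/2)^(n+1))⁻¹ * ‖(c:ℂ) + τ * Complex.I‖^(-(1 + g*(κ+n))) := by
  have h := inv_pow_bound g c (n+1) hg1 hg2 hc hc1 τ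
  have hn : 0 < ‖(c:ℂ) + τ * Complex.I‖ := by linarith [Vnorm_ge c τ hc]
  unfold Jf
  rw [norm_mul, norm_mul, Complex.norm_cpow_real, Complex.norm_real, Real.norm_of_nonneg (by linarith)]
  have e : -(1 + g*(κ+n)) = (g-1-g*κ) + (-(g*((n+1:ℕ):ℝ))) := by push_cast; ring
  rw [e, rpow_add hn]
  calc _ ≤ _ := mul_le_mul_of_nonneg_left h (by positivity)
    _ = _ := by ring

lemma Jf_int (g κ c : ℝ) (n : ℕ) (hg1 : 1 ≤ g) (hg2 : g ≤ 2) (hκ : 0 < κ) (hc : 0 < c) (hc1 : c < 1) :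
    Integrable (fun τ : ℝ => Jf g κ n ((c:ℂ) + τ * Complex.I)) := by
  refine ((Vint c (g*(κ+n)) hc (by positivity)).const_mul (g * (((1 - c^g)/2)^(n+1))⁻¹)).mono' 
    (Jf_cont g κ c n hg1 hg2 hc hc1).aestronglyMeasurable (Eventually.of_forall fun τ => ?_)
  exact Jf_bound g κ c n hg1 hg2 hc hc1 τ

lemma J_rec (g κ c : ℝ) (n : ℕ) (hg1 : 1 ≤ g) (hg2 : g ≤ 2) (hκ : 0 < κ) (hc : 0 < c) (hc1 : c < 1) :
    ((n:ℂ)+1) * ∫ τ : ℝ, Jf g κ (n+1) ((c:ℂ) + τ * Complex.I) =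
      κ * ∫ τ : ℝ, Jf g (κ+1) n ((c:ℂ) + τ * Complex.I) := by
  set f : ℝ → ℂ := fun τ => ((c:ℂ) + τ * Complex.I)^((-(g*κ):ℝ):ℂ) * ((1 - ((c:ℂ) + τ * Complex.I)^(g:ℂ))^(n+1))⁻¹ with hf
  have i1 := Jf_int g κ c (n+1) hg1 hg2 hκ hc hc1
  have i2 := Jf_int g (κ+1) c n hg1 hg2 (by linarith) hc hc1
  have hd : ∀ τ : ℝ, HasDerivAt f (Complex.I * (((n:ℂ)+1) * Jf g κ (n+1) ((c:ℂ) + τ * Complex.I) - κ * Jf g (κ+1) n ((c:ℂ) + τ * Complex.I))) τ := by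
    intro τ
    have hV : HasDerivAt (fun τ : ℝ => (c:ℂ) + τ * Complex.I) Complex.I τ := by
      have := ((hasDerivAt_id τ).ofReal_comp.mul_const Complex.I).const_add (c:ℂ)
      simpa using this
    set V := (c:ℂ) + τ * Complex.I with hVd
    have hsl : V ∈ Complex.slitPlane := Vslit (by rw [hVd, Vre]; exact hc)
    have hne : V ≠ 0 := Complex.slitPlane_ne_zero hsl
    have hd1 : ∀ r : ℝ, HasDerivAt (fun τ : ℝ => ((c:ℂ) + τ * Complex.I)^(r:ℂ)) (r * V^((r-1:ℝ):ℂ) * Complex.I) τ := by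
      intro r
      have := (hasDerivAt_id V).cpow_const (c := (r:ℂ)) hsl
      have h2 : HasDerivAt (fun τ : ℝ => ((c:ℂ) + τ * Complex.I)^(r:ℂ)) _ τ := this.comp_of_eq τ hV rfl
      refine h2.congr_deriv ?_
      simp
    have hne2 := one_sub_ne g c hg1 hg2 hc hc1 τ
    rw [← hVd] at hne2
    have h3 := ((hd1 g).const_sub 1).fun_pow (n+1)
    have h4 := h3.inv (pow_ne_zero _ hne2)
    have h5 := (hd1 (-(g*κ))).mul h4
    refine h5.congr_deriv ?_
    unfold Jf
    have e1 : V^((g-1-g*κ:ℝ):ℂ) = V^((-(g*κ):ℝ):ℂ) * V^((g-1:ℝ):ℂ) := by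
      rw [← Complex.cpow_add _ _ hne]; congr 1; push_cast; ring
    have e2 : V^((g-1-g*(κ+1):ℝ):ℂ) = V^((-(g*κ)-1:ℝ):ℂ) := by
      congr 1; push_cast; ring
    rw [e1, e2]
    simp only [Pi.inv_apply, ← hVd]
    simp only [Nat.add_sub_cancel]
    field_simp
    push_cast
    ring
  have hlim : ∀ l : Filter ℝ, Tendsto (fun τ : ℝ => ‖(c:ℂ) + τ * Complex.I‖) l atTop → Tendsto f l (nhds 0) := by
    intro l hl
    have h1 := (tendsto_rpow_neg_atTop (y := g*κ + g*((n+1:ℕ):ℝ)) (by positivity)).comp hl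
    have h2 := h1.const_mul ((((1 - c^g)/2)^(n+1))⁻¹)
    rw [mul_zero] at h2
    refine squeeze_zero_norm (fun τ => ?_) h2
    have hn : 0 < ‖(c:ℂ) + τ * Complex.I‖ := by linarith [Vnorm_ge c τ hc]
    have h := inv_pow_bound g c (n+1) hg1 hg2 hc hc1 τ
    simp only [hf, Function.comp]
    rw [norm_mul, Complex.norm_cpow_real, neg_add, rpow_add hn]
    calc _ ≤ _ := mul_le_mul_of_nonneg_left h (by positivity)
      _ = _ := by ring
  have key := integral_of_hasDerivAt_of_tendsto hd (((i1.const_mul _).sub (i2.const_mul _)).const_mul _)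
    (hlim _ (Vtop c).2) (hlim _ (Vtop c).1)
  rw [integral_const_mul, integral_sub (i1.const_mul _) (i2.const_mul _), integral_const_mul, integral_const_mul, sub_zero] at key
  have := (mul_eq_zero.1 key).resolve_left Complex.I_ne_zero
  exact sub_eq_zero.1 this


lemma cpow_eq_one_imp (g : ℝ) (hg1 : 1 ≤ g) (hg2 : g < 2) (V : ℂ) (hV : 0 < V.re) (h : V^(g:ℂ) = 1) : V = 1 := by
  have hne := Vne hV
  have hn : ‖V‖ = 1 := by
    have h1 := congrArg norm h
    rw [Complex.norm_cpow_real, norm_one] at h1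
    have h2 : ‖V‖ = (‖V‖^g)^(g⁻¹) := by
      rw [← rpow_mul (norm_nonneg _), mul_inv_cancel₀ (by linarith), rpow_one]
    rw [h2, h1, one_rpow]
  have h1 := Complex.abs_arg_lt_pi_div_two_iff.2 (Or.inl hV)
  have h2 : cos (Complex.arg V * g) = 1 := by
    have := congrArg Complex.re h
    rw [Complex.cpow_ofReal_re, hn, one_rpow, one_mul] at this
    simpa using this
  rw [abs_lt] at h1
  have h3 : Complex.arg V * g = 0 := by
    refine (cos_eq_one_iff_of_lt_of_lt ?_ ?_).1 h2 <;> nlinarith [pi_pos]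
  have h4 : Complex.arg V = 0 := (mul_eq_zero.1 h3).resolve_right (by linarith)
  have := Complex.norm_mul_exp_arg_mul_I V
  rw [hn, h4] at this
  simpa using this.symm

/-- the half plane -/
def HP : Set ℂ := {V | 0 < V.re}

lemma HP_open : IsOpen HP := isOpen_lt continuous_const Complex.continuous_re

noncomputable def hq (g : ℝ) : ℂ → ℂ := dslope (fun V : ℂ => V^(g:ℂ)) 1
noncomputable def kq (g κ : ℝ) (V : ℂ) : ℂ := g * V^((g-1-g*κ : ℝ):ℂ) / hq g V - V⁻¹
noncomputable def Fq (g κ : ℝ) : ℂ → ℂ := dslope (kq g κ) 1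

lemma one_mem_HP : (1:ℂ) ∈ HP := by simp [HP]

lemma cpow_diffOn (r : ℝ) : DifferentiableOn ℂ (fun V : ℂ => V^(r:ℂ)) HP := by
  intro V hV
  exact (((hasDerivAt_id V).cpow_const (c := (r:ℂ)) (Vslit hV)).differentiableAt).differentiableWithinAt

lemma hq_diff (g : ℝ) : DifferentiableOn ℂ (hq g) HP :=
  (Complex.differentiableOn_dslope (HP_open.mem_nhds one_mem_HP)).2 (cpow_diffOn g)

lemma hq_one (g : ℝ) : hq g 1 = g := by
  rw [hq, dslope_same]
  have := ((hasDerivAt_id (1:ℂ)).cpow_const (c := (g:ℂ)) (Vslit (by simp))).deriv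
  simpa using this

lemma hq_of_ne (g : ℝ) (V : ℂ) (hV : V ≠ 1) : hq g V = (V^(g:ℂ) - 1)/(V-1) := by
  rw [hq, dslope_of_ne _ hV, slope_def_field, Complex.one_cpow]

lemma hq_ne (g : ℝ) (hg1 : 1 ≤ g) (hg2 : g < 2) (V : ℂ) (hV : V ∈ HP) : hq g V ≠ 0 := by
  by_cases h : V = 1
  · rw [h, hq_one]; norm_cast; linarith
  · rw [hq_of_ne g V h]
    refine div_ne_zero (fun h' => h (cpow_eq_one_imp g hg1 hg2 V hV (sub_eq_zero.1 h'))) (sub_ne_zero.2 h)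

lemma Fq_diff (g κ : ℝ) (hg1 : 1 ≤ g) (hg2 : g < 2) : DifferentiableOn ℂ (Fq g κ) HP := by
  refine (Complex.differentiableOn_dslope (HP_open.mem_nhds one_mem_HP)).2 ?_
  unfold kq
  refine DifferentiableOn.sub (DifferentiableOn.div ((differentiableOn_const _).mul (cpow_diffOn _)) (hq_diff g) (hq_ne g hg1 hg2)) ?_
  exact differentiableOn_id.inv (fun V hV => Vne hV)

lemma Fq_of_ne (g κ : ℝ) (hg1 : 1 ≤ g) (hg2 : g < 2) (V : ℂ) (hV : V ∈ HP) (h : V ≠ 1) :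
    Fq g κ V = V⁻¹ * (1-V)⁻¹ - Jf g κ 0 V := by
  have hg : (g:ℂ) ≠ 0 := by norm_cast; linarith
  have h2 : V - 1 ≠ 0 := sub_ne_zero.2 h
  have h3 : V^(g:ℂ) - 1 ≠ 0 := fun h' => h (cpow_eq_one_imp g hg1 hg2 V hV (sub_eq_zero.1 h'))
  have h2' : 1 - V ≠ 0 := sub_ne_zero.2 (Ne.symm h)
  have h3' : 1 - V^(g:ℂ) ≠ 0 := by
    rw [← neg_sub]; exact neg_ne_zero.2 h3
  have h4 := Vne hV
  rw [Fq, dslope_of_ne _ h, slope_def_field, kq, kq, hq_one, hq_of_ne g V h, Complex.one_cpow, Jf]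
  simp only [zero_add, pow_one, mul_one, inv_one, div_self hg, sub_self, sub_zero]
  rw [← neg_sub V 1, ← neg_sub (V^(g:ℂ)) 1]
  field_simp
  ring

lemma Fq_bound (g κ : ℝ) (hg1 : 1 ≤ g) (hg2 : g < 2) (hκ : 0 < κ) (V : ℂ) (hV : V ∈ HP) (h : 2 ≤ ‖V‖) :
    ‖Fq g κ V‖ ≤ (2*g+2) * ‖V‖^(-(1 + min (g*κ) 1)) := by
  have hV1 : V ≠ 1 := by
    rintro rfl; norm_num at h
  have hn : 0 < ‖V‖ := by linarith
  have hVg : ‖V‖ ≤ ‖V‖^g := by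
    have := rpow_le_rpow_of_exponent_le (by linarith : 1 ≤ ‖V‖) hg1
    rwa [rpow_one] at this
  rw [Fq_of_ne g κ hg1 hg2 V hV hV1]
  refine (norm_sub_le _ _).trans ?_
  have h1 : ‖V⁻¹ * (1-V)⁻¹‖ ≤ 2 * ‖V‖^(-(1 + min (g*κ) 1)) := by
    have a1 : ‖V‖/2 ≤ ‖1 - V‖ := by
      have := norm_sub_norm_le V 1
      rw [norm_sub_rev, norm_one] at this
      linarith
    have a2 : ‖V‖^(-(2:ℝ)) ≤ ‖V‖^(-(1 + min (g*κ) 1)) := by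
      apply rpow_le_rpow_of_exponent_le (by linarith)
      have := min_le_right (g*κ) 1
      linarith
    rw [norm_mul, norm_inv, norm_inv]
    have a3 : ‖1-V‖⁻¹ ≤ (‖V‖/2)⁻¹ := inv_anti₀ (by positivity) a1
    have a4 : ‖V‖^(-(2:ℝ)) = ‖V‖⁻¹ * ‖V‖⁻¹ := by
      rw [rpow_neg hn.le]; norm_cast; rw [sq, mul_inv]
    calc _ ≤ ‖V‖⁻¹ * (‖V‖/2)⁻¹ := by gcongr
      _ = 2 * ‖V‖^(-(2:ℝ)) := by rw [a4]; field_simp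
      _ ≤ _ := by gcongr
  have h2 : ‖Jf g κ 0 V‖ ≤ 2 * g * ‖V‖^(-(1 + min (g*κ) 1)) := by
    have a1 : ‖V‖^g/2 ≤ ‖1 - V^(g:ℂ)‖ := by
      have := norm_sub_norm_le (V^(g:ℂ)) 1
      rw [norm_sub_rev, norm_one, Complex.norm_cpow_real] at this
      linarith
    have a2 : ‖V‖^(-(1+g*κ)) ≤ ‖V‖^(-(1 + min (g*κ) 1)) := by
      apply rpow_le_rpow_of_exponent_le (by linarith)
      have := min_le_left (g*κ) 1
      linarith
    have hp := rpow_pos_of_pos hn g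
    have a3 : ‖1-V^(g:ℂ)‖⁻¹ ≤ (‖V‖^g/2)⁻¹ := inv_anti₀ (by positivity) a1
    unfold Jf
    rw [zero_add, pow_one, norm_mul, norm_mul, norm_inv, Complex.norm_cpow_real, Complex.norm_real, Real.norm_of_nonneg (by linarith)]
    calc _ ≤ g * ‖V‖^(g-1-g*κ) * (‖V‖^g/2)⁻¹ := by gcongr
      _ = 2 * g * ‖V‖^(-(1+g*κ)) := by
        rw [show g-1-g*κ = -(1+g*κ) + g by ring, rpow_add hn]; field_simp
      _ ≤ _ := by gcongr
  linarith

lemma line_ne_one (c : ℝ) (hc1 : c < 1) (τ : ℝ) : (c:ℂ) + τ * Complex.I ≠ 1 := by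
  intro h
  have := congrArg Complex.re h
  rw [Vre] at this
  simp at this
  linarith

lemma inv_int (c : ℝ) (hc : 0 < c) (hc1 : c < 1) :
    Integrable (fun τ : ℝ => ((c:ℂ) + τ * Complex.I)⁻¹ * (1 - ((c:ℂ) + τ * Complex.I))⁻¹) := by
  have h := Jf_int 1 1 c 0 le_rfl (by norm_num) one_pos hc hc1
  convert h using 2 with τ
  simp [Jf, Complex.cpow_neg_one]

lemma cauchy_int (c : ℝ) (hc : 0 < c) : Integrable (fun τ : ℝ => c / (c^2+τ^2)) ∧ ∫ τ : ℝ, c / (c^2+τ^2) = π := by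
  have e : ∀ τ : ℝ, c / (c^2+τ^2) = c⁻¹ * (1 + (τ/c)^2)⁻¹ := by
    intro τ
    have : 0 < c^2+τ^2 := by positivity
    field_simp
  simp_rw [e]
  refine ⟨(integrable_inv_one_add_sq.comp_div hc.ne').const_mul _, ?_⟩
  rw [integral_const_mul, Measure.integral_comp_div (fun x : ℝ => (1+x^2)⁻¹), integral_univ_inv_one_add_sq, abs_of_pos hc]
  simp only [smul_eq_mul]
  field_simp

lemma inv_int_val (c : ℝ) (hc : 0 < c) (hc1 : c < 1) :
    (∫ τ : ℝ, ((c:ℂ) + τ * Complex.I)⁻¹ * (1 - ((c:ℂ) + τ * Complex.I))⁻¹).re = 2 * π := by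
  have h := inv_int c hc hc1
  have h1 : (∫ τ : ℝ, ((c:ℂ) + τ * Complex.I)⁻¹ * (1 - ((c:ℂ) + τ * Complex.I))⁻¹).re = 
     ∫ τ : ℝ, (((c:ℂ) + τ * Complex.I)⁻¹ * (1 - ((c:ℂ) + τ * Complex.I))⁻¹).re := (integral_re h).symm
  rw [h1]
  have e : ∀ τ : ℝ, (((c:ℂ) + τ * Complex.I)⁻¹ * (1 - ((c:ℂ) + τ * Complex.I))⁻¹).re = c / (c^2+τ^2) + (1-c)/((1-c)^2+τ^2) := by
    intro τ
    have n1 : (c:ℂ) + τ * Complex.I ≠ 0 := Vne (by rwa [Vre])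
    have n2 : 1 - ((c:ℂ) + τ * Complex.I) ≠ 0 := sub_ne_zero.2 (line_ne_one c hc1 τ).symm
    have : ((c:ℂ) + τ * Complex.I)⁻¹ * (1 - ((c:ℂ) + τ * Complex.I))⁻¹ = ((c:ℂ) + τ * Complex.I)⁻¹ + (1 - ((c:ℂ) + τ * Complex.I))⁻¹ := by
      field_simp; ring
    rw [this, Complex.add_re, Complex.inv_re, Complex.inv_re, Complex.normSq_apply, Complex.normSq_apply]
    simp [sq]
  simp_rw [e]
  have c1 := cauchy_int c hc
  have c2 := cauchy_int (1-c) (by linarith)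
  rw [integral_add c1.1 c2.1, c1.2, c2.2]; ring

lemma Fq_integral (g κ c : ℝ) (hg1 : 1 ≤ g) (hg2 : g < 2) (hκ : 0 < κ) (hc : 0 < c) (hc1 : c < 1) :
    ∫ τ : ℝ, Fq g κ ((c:ℂ) + τ * Complex.I) = 0 := by
  have hintg : Integrable (fun τ : ℝ => Fq g κ ((c:ℂ) + τ * Complex.I)) := by
    have := (inv_int c hc hc1).sub (Jf_int g κ c 0 hg1 hg2.le hκ hc hc1)
    refine this.congr (Eventually.of_forall fun τ => ?_)
    simp only [Pi.sub_apply]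
    rw [Fq_of_ne g κ hg1 hg2 _ (by simpa [HP] using hc) (line_ne_one c hc1 τ)]
  have hlim := intervalIntegral_tendsto_integral (f := fun τ : ℝ => Fq g κ ((c:ℂ) + τ * Complex.I)) hintg
    (a := fun T : ℝ => -T) (b := fun T : ℝ => T) (l := atTop) tendsto_neg_atTop_atBot tendsto_id
  refine tendsto_nhds_unique hlim ?_
  set δ := min (g*κ) 1 with hδ
  have hδ0 : 0 < δ := lt_min (by positivity) one_pos
  have hz : Tendsto (fun T : ℝ => 4 * (2*g+2) * T^(-δ)) atTop (nhds 0) := by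
    have := (tendsto_rpow_neg_atTop hδ0).const_mul (4 * (2*g+2))
    rwa [mul_zero] at this
  refine squeeze_zero_norm' ?_ hz
  filter_upwards [eventually_ge_atTop 2] with T hT
  have hT0 : 0 < T := by linarith
  have H := Complex.integral_boundary_rect_eq_zero_of_differentiableOn (Fq g κ) ⟨c, -T⟩ ⟨T, T⟩ (by
    refine (Fq_diff g κ hg1 hg2).mono ?_
    intro z hz
    rw [Complex.mem_reProdIm] at hz
    have := hz.1
    rw [uIcc_of_le (by simp; linarith)] at this
    exact lt_of_lt_of_le hc this.1)
  simp only at H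
  have bd : ∀ V : ℂ, V ∈ HP → T ≤ ‖V‖ → ‖Fq g κ V‖ ≤ (2*g+2) * T^(-(1+δ)) := by
    intro V hV hTV
    refine (Fq_bound g κ hg1 hg2 hκ V hV (by linarith)).trans ?_
    have := rpow_le_rpow_of_nonpos hT0 hTV (by linarith : -(1+δ) ≤ 0)
    gcongr
  have b1 : ‖∫ x : ℝ in c..T, Fq g κ (x + ((-T:ℝ):ℂ) * Complex.I)‖ ≤ (2*g+2) * T^(-(1+δ)) * |T - c| := by
    apply intervalIntegral.norm_integral_le_of_norm_le_const
    intro x hx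
    rw [uIoc_of_le (by linarith)] at hx
    apply bd
    · simp [HP]; linarith [hx.1]
    · have := Complex.abs_im_le_norm ((x:ℂ) + ((-T:ℝ):ℂ) * Complex.I)
      simpa [abs_of_pos hT0] using this
  have b2 : ‖∫ x : ℝ in c..T, Fq g κ (x + ((T:ℝ):ℂ) * Complex.I)‖ ≤ (2*g+2) * T^(-(1+δ)) * |T - c| := by
    apply intervalIntegral.norm_integral_le_of_norm_le_const
    intro x hx
    rw [uIoc_of_le (by linarith)] at hx
    apply bd
    · simp [HP]; linarith [hx.1]
    · have := Complex.abs_im_le_norm ((x:ℂ) + ((T:ℝ):ℂ) * Complex.I)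
      simpa [abs_of_pos hT0] using this
  have b3 : ‖∫ y : ℝ in (-T)..T, Fq g κ ((T:ℂ) + y * Complex.I)‖ ≤ (2*g+2) * T^(-(1+δ)) * |T - -T| := by
    apply intervalIntegral.norm_integral_le_of_norm_le_const
    intro x _
    apply bd
    · simp [HP]; linarith
    · exact Vnorm_ge T x hT0
  have e : ∀ A B C D : ℂ, A - B + Complex.I • C - Complex.I • D = 0 → ‖D‖ ≤ ‖A‖ + ‖B‖ + ‖C‖ := by
    intro A B C D h
    have : D = -Complex.I * A + Complex.I * B + C := by
      simp only [smul_eq_mul] at h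
      linear_combination (Complex.I) * h + (D - C) * Complex.I_sq
    rw [this]
    refine (norm_add₃_le).trans ?_
    simp
  refine (e _ _ _ _ H).trans ?_
  have hr : T^(-δ) = T^(-(1+δ)) * T := by
    rw [← rpow_add_one hT0.ne']; congr 1; ring
  have hp := rpow_pos_of_pos hT0 (-(1+δ))
  rw [abs_of_nonneg (by linarith)] at b1 b2 b3
  rw [hr]
  have : 0 ≤ (2*g+2) * T^(-(1+δ)) * c := by positivity
  linarith

lemma J_val (g c : ℝ) (hg1 : 1 ≤ g) (hg2 : g < 2) (hc : 0 < c) (hc1 : c < 1) (n : ℕ) : ∀ (κ : ℝ) (_ : 0 < κ), 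
    (∫ τ : ℝ, Jf g κ n ((c:ℂ) + τ * Complex.I)).re = 2 * π * (pa n κ / n.factorial) := by
  induction n with
  | zero =>
    intro κ hκ
    have h := Fq_integral g κ c hg1 hg2 hκ hc hc1
    have e : (fun τ : ℝ => Fq g κ ((c:ℂ) + τ * Complex.I)) = fun τ : ℝ => 
       ((c:ℂ) + τ * Complex.I)⁻¹ * (1 - ((c:ℂ) + τ * Complex.I))⁻¹ - Jf g κ 0 ((c:ℂ) + τ * Complex.I) := by
      funext τ
      rw [Fq_of_ne g κ hg1 hg2 _ (by simpa [HP] using hc) (line_ne_one c hc1 τ)]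
    rw [e, integral_sub (inv_int c hc hc1) (Jf_int g κ c 0 hg1 hg2.le hκ hc hc1), sub_eq_zero] at h
    rw [← h, inv_int_val c hc hc1]
    simp [pa_zero]
  | succ n ih =>
    intro κ hκ
    have h := J_rec g κ c n hg1 hg2.le hκ hc hc1
    have h2 := congrArg Complex.re h
    have e1 : ((n:ℂ)+1) = ((n+1:ℝ):ℂ) := by push_cast; rfl
    rw [e1, Complex.re_ofReal_mul, Complex.re_ofReal_mul, ih (κ+1) (by linarith)] at h2
    have e2 : pa (n+1) κ = κ * pa n (κ+1) := by
      have := pa_add 1 n κ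
      rw [add_comm 1 n] at this
      rw [this]; simp [pa]
    rw [e2, Nat.factorial_succ]
    have : (0:ℝ) < n + 1 := by positivity
    apply mul_left_cancel₀ this.ne'
    rw [h2]
    push_cast
    field_simp


lemma one_sub_cpow_hasSum (ν : ℝ) (w : ℂ) (hw : ‖w‖ < 1) :
    HasSum (fun j : ℕ => ((Ring.choose ν j : ℝ):ℂ) * (-w)^j) ((1-w)^(ν:ℂ)) := by
  have h := (Complex.one_add_cpow_hasFPowerSeriesOnBall_zero (a := (ν:ℂ))).hasSum (y := -w)
    (by simp [enorm_eq_nnnorm]; rw [← NNReal.coe_lt_coe]; simpa using hw)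
  simp only [binomialSeries_apply, zero_add, List.prod_ofFn, Finset.prod_const, Finset.card_univ, Fintype.card_fin, smul_eq_mul] at h
  rw [← sub_eq_add_neg] at h
  simp_rw [Complex.ofReal_choose]
  exact h

lemma w_norm (c d u τ : ℝ) (hc : 0 < c) (hd : 0 < d) (hu : 0 ≤ u) :
    ‖(u:ℂ) * ((c:ℂ) + τ * Complex.I)^((-d:ℝ):ℂ)‖ ≤ u * c^(-d) := by
  rw [norm_mul, Complex.norm_cpow_real, Complex.norm_real, Real.norm_of_nonneg hu]
  exact mul_le_mul_of_nonneg_left (rpow_le_rpow_of_nonpos hc (Vnorm_ge c τ hc) (by linarith)) hu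

/-- representation for u < c^d -/
lemma rep_lt (α g d κ0 a b c u L : ℝ) (n : ℕ) (hα : 0 < α) (hg1 : 1 ≤ g) (hg2 : g < 2) (hd : d = g/α) 
    (hκ : κ0 = (a+1)/α) (ha : -1 < a) (hc : 0 < c) (hc1 : c < 1) (hu : 0 ≤ u) (huc : u < c^d)
    (hs : HasSum (fun k : ℕ => Ring.choose (n + b) k * (-u)^k * (pa n ((a+1+k)/α) / n.factorial)) L) :
    2 * π * L = (∫ τ : ℝ, Jf g κ0 n ((c:ℂ) + τ * Complex.I) * 
      (1 - (u:ℂ) * ((c:ℂ) + τ * Complex.I)^((-d:ℝ):ℂ))^((n+b:ℝ):ℂ)).re := by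
  set ν : ℝ := n + b with hν
  have hκ0 : 0 < κ0 := by rw [hκ]; exact div_pos (by linarith) hα
  have hd0 : 0 < d := by rw [hd]; positivity
  set r := u * c^(-d) with hr
  have hr1 : r < 1 := by
    rw [hr, rpow_neg hc.le, ← div_eq_mul_inv, div_lt_one (rpow_pos_of_pos hc _)]; exact huc
  have hr0 : 0 ≤ r := by positivity
  have hsum : Summable (fun k : ℕ => |Ring.choose ν k| * r^k) := by
    have := (one_sub_rpow_hasSum ν r (by rwa [abs_of_nonneg hr0])).summable.abs
    simpa [abs_mul, abs_of_nonneg hr0] using this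
  set F : ℕ → ℝ → ℂ := fun k τ => Jf g κ0 n ((c:ℂ) + τ * Complex.I) * 
    (((Ring.choose ν k : ℝ):ℂ) * (-((u:ℂ) * ((c:ℂ) + τ * Complex.I)^((-d:ℝ):ℂ)))^k) with hF
  have hJc := Jf_cont g κ0 c n hg1 hg2.le hc hc1
  have hJi := Jf_int g κ0 c n hg1 hg2.le hκ0 hc hc1
  have key := hasSum_integral_of_dominated_convergence (μ := volume) (F := F) (f := fun τ : ℝ => Jf g κ0 n ((c:ℂ) + τ * Complex.I) * 
      (1 - (u:ℂ) * ((c:ℂ) + τ * Complex.I)^((-d:ℝ):ℂ))^(ν:ℂ))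
    (fun k τ => ‖Jf g κ0 n ((c:ℂ) + τ * Complex.I)‖ * (|Ring.choose ν k| * r^k)) ?_ ?_ ?_ ?_ ?_
  · have e : ∀ k, ∫ τ, F k τ = ((Ring.choose ν k * (-u)^k : ℝ):ℂ) * ∫ τ : ℝ, Jf g (κ0 + k/α) n ((c:ℂ) + τ * Complex.I) := by
      intro k
      rw [← integral_const_mul]
      congr 1
      funext τ
      have hV := Vne (V := (c:ℂ) + τ * Complex.I) (by rwa [Vre])
      simp only [hF, Jf]
      generalize (c:ℂ) + τ * Complex.I = V at hV
      rw [← neg_mul, mul_pow, ← Complex.cpow_mul_nat]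
      have : V^((g-1-g*(κ0+k/α):ℝ):ℂ) = V^((g-1-g*κ0:ℝ):ℂ) * V^((-d:ℝ)*(k:ℂ)) := by
        rw [← Complex.cpow_add _ _ hV]; congr 1; rw [hd]; push_cast; ring
      rw [this]
      push_cast
      ring
    have key2 := Complex.reCLM.hasSum key
    simp only [Complex.reCLM_apply, e, Complex.re_ofReal_mul] at key2
    refine (hs.mul_left (2*π)).unique ?_
    have e3 : ∀ k : ℕ, 2 * π * (Ring.choose ν k * (-u)^k * (pa n ((a+1+k)/α) / n.factorial)) = Ring.choose ν k * (-u)^k * (∫ τ : ℝ, Jf g (κ0 + k/α) n ((c:ℂ) + τ * Complex.I)).re := by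
      intro k
      rw [J_val g c hg1 hg2 hc hc1 n (κ0+k/α) (by positivity)]
      rw [show (a+1+k)/α = κ0 + k/α by rw [hκ]; ring]
      ring
    simp_rw [e3]
    exact key2
  · intro k
    apply Continuous.aestronglyMeasurable
    have := Vcpow_cont c (-d) hc
    simp only [hF]
    fun_prop
  · intro k
    refine Eventually.of_forall fun τ => ?_
    simp only [hF]
    rw [norm_mul, norm_mul, norm_pow, norm_neg, Complex.norm_real, Real.norm_eq_abs]
    have := w_norm c d u τ hc hd0 hu
    gcongr
  · exact Eventually.of_forall fun τ => hsum.mul_left _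
  · simp_rw [tsum_mul_left]
    exact hJi.norm.mul_const _
  · refine Eventually.of_forall fun τ => ?_
    exact (one_sub_cpow_hasSum ν _ ((w_norm c d u τ hc hd0 hu).trans_lt hr1)).mul_left _

lemma rep_bound (α g d κ0 a b c u : ℝ) (n : ℕ) (hn : 1 ≤ n) (P : Polynomial ℝ) (hα : 0 < α) (hg1 : 1 ≤ g) (hg2 : g < 2) (hd : d = g/α) 
    (hκ : κ0 = (a+1)/α) (ha : -1 < a) (hb : -1 < b) (hc : 0 < c) (hc1 : c < 1) (hu : 0 < u) (huc : u ≤ c^d)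
    (hs : ∀ u : ℝ, |u| < 1 → HasSum (fun k : ℕ => Ring.choose (n + b) k * (-u)^k * (pa n ((a+1+k)/α) / n.factorial))
      (P.eval (1-2*u) * (1-u)^b)) :
    2 * π * (|P.eval (1-2*u)| * (1-u)^b) ≤ ∫ τ : ℝ, ‖Jf g κ0 n ((c:ℂ) + τ * Complex.I)‖ * 
      ‖1 - (u:ℂ) * ((c:ℂ) + τ * Complex.I)^((-d:ℝ):ℂ)‖^(n+b:ℝ) := by
  have hd0 : 0 < d := by rw [hd]; positivity
  have hν : 0 < n + b := by
    have : (1:ℝ) ≤ n := by exact_mod_cast hn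
    linarith
  have hu1 : u < 1 := huc.trans_lt (rpow_lt_one hc.le hc1 hd0)
  have hκ0 : 0 < κ0 := by rw [hκ]; exact div_pos (by linarith) hα
  have hJc := Jf_cont g κ0 c n hg1 hg2.le hc hc1
  have hJi := Jf_int g κ0 c n hg1 hg2.le hκ0 hc hc1
  have hw1 : ∀ v : ℝ, 0 ≤ v → v ≤ u → ∀ τ : ℝ, ‖(v:ℂ) * ((c:ℂ) + τ * Complex.I)^((-d:ℝ):ℂ)‖ ≤ 1 := by
    intro v hv hvu τ
    refine (w_norm c d v τ hc hd0 hv).trans ?_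
    rw [rpow_neg hc.le, ← div_eq_mul_inv, div_le_one (rpow_pos_of_pos hc _)]
    linarith
  have eq : 2 * π * (P.eval (1-2*u) * (1-u)^b) = (∫ τ : ℝ, Jf g κ0 n ((c:ℂ) + τ * Complex.I) * 
      (1 - (u:ℂ) * ((c:ℂ) + τ * Complex.I)^((-d:ℝ):ℂ))^((n+b:ℝ):ℂ)).re := by
    have t1 : Tendsto (fun v : ℝ => 2 * π * (P.eval (1-2*v) * (1-v)^b)) (nhdsWithin u (Iio u)) (nhds (2 * π * (P.eval (1-2*u) * (1-u)^b))) := by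
      apply tendsto_nhdsWithin_of_tendsto_nhds
      have : ContinuousAt (fun v : ℝ => 2 * π * (P.eval (1-2*v) * (1-v)^b)) u := by
        refine continuousAt_const.mul (ContinuousAt.mul ?_ ?_)
        · exact (P.continuous.comp (by fun_prop : Continuous fun v : ℝ => 1 - 2*v)).continuousAt
        · exact ContinuousAt.rpow_const (by fun_prop) (Or.inl (by linarith))
      exact this
    have hev : ∀ᶠ v in nhdsWithin u (Iio u), v ∈ Ioo 0 u := Ioo_mem_nhdsLT hu
    have t2 : Tendsto (fun v : ℝ => ∫ τ : ℝ, Jf g κ0 n ((c:ℂ) + τ * Complex.I) * 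
      (1 - (v:ℂ) * ((c:ℂ) + τ * Complex.I)^((-d:ℝ):ℂ))^((n+b:ℝ):ℂ)) (nhdsWithin u (Iio u)) 
      (nhds (∫ τ : ℝ, Jf g κ0 n ((c:ℂ) + τ * Complex.I) * 
      (1 - (u:ℂ) * ((c:ℂ) + τ * Complex.I)^((-d:ℝ):ℂ))^((n+b:ℝ):ℂ))) := by
      refine tendsto_integral_filter_of_dominated_convergence (fun τ => ‖Jf g κ0 n ((c:ℂ) + τ * Complex.I)‖ * 2^(n+b:ℝ)) ?_ ?_ (hJi.norm.mul_const _) ?_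
      · refine hev.mono fun v _ => ?_
        have := (Vcpow_cont c (-d) hc).measurable
        refine (hJc.measurable.mul ?_).aestronglyMeasurable
        exact (measurable_const.sub (measurable_const.mul this)).pow_const _
      · filter_upwards [hev] with v hv
        refine Eventually.of_forall fun τ => ?_
        rw [norm_mul, Complex.norm_cpow_real]
        have h1 := hw1 v hv.1.le hv.2.le τ
        have : ‖1 - (v:ℂ) * ((c:ℂ) + τ * Complex.I)^((-d:ℝ):ℂ)‖ ≤ 2 := by
          refine (norm_sub_le _ _).trans ?_
          rw [norm_one]; linarith
        gcongr
      · refine Eventually.of_forall fun τ => ?_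
        apply tendsto_nhdsWithin_of_tendsto_nhds
        apply Tendsto.const_mul
        set z : ℝ → ℂ := fun v => 1 - (v:ℂ) * ((c:ℂ) + τ * Complex.I)^((-d:ℝ):ℂ) with hz
        have hzc : ContinuousAt z u := by simp only [hz]; fun_prop
        have hc2 : ContinuousAt (fun w : ℂ => w^((n+b:ℝ):ℂ)) (z u) := by
          by_cases h0 : z u = 0
          · rw [h0]
            have := (Complex.continuousAt_cpow_zero_of_re_pos (z := ((n+b:ℝ):ℂ)) (by simpa using hν))
            exact this.comp (f := fun w : ℂ => (w, ((n+b:ℝ):ℂ))) (by fun_prop)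
          · refine ContinuousAt.cpow continuousAt_id continuousAt_const ?_
            have h1 := hw1 u hu.le le_rfl τ
            have h2 := Complex.re_le_norm ((u:ℂ) * ((c:ℂ) + τ * Complex.I)^((-d:ℝ):ℂ))
            have h3 : (z u).re = 1 - ((u:ℂ) * ((c:ℂ) + τ * Complex.I)^((-d:ℝ):ℂ)).re := by simp [hz]
            rw [Complex.mem_slitPlane_iff]
            by_contra! hcon
            have h4 : (z u).re = 0 := le_antisymm hcon.1 (by rw [h3]; linarith)
            exact h0 (Complex.ext h4 hcon.2)
        exact hc2.comp hzc
    have t3 := (Complex.continuous_re.tendsto _).comp t2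
    refine tendsto_nhds_unique t1 (t3.congr' ?_)
    filter_upwards [hev] with v hv
    exact (rep_lt α g d κ0 a b c v _ n hα hg1 hg2 hd hκ ha hc hc1 hv.1.le (hv.2.trans_le huc) 
      (hs v (by rw [abs_of_pos hv.1]; linarith [hv.2]))).symm
  have h1 : 2 * π * (|P.eval (1-2*u)| * (1-u)^b) = |2 * π * (P.eval (1-2*u) * (1-u)^b)| := by
    have : 0 < (1-u)^b := rpow_pos_of_pos (by linarith) _
    rw [abs_mul (2*π), abs_mul (P.eval _), abs_of_pos this, abs_of_pos (by positivity : 0 < 2 * π)]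
  rw [h1, eq]
  refine (Complex.abs_re_le_norm _).trans ((norm_integral_le_integral_norm _).trans (le_of_eq ?_))
  congr 1
  funext τ
  rw [norm_mul, Complex.norm_cpow_real]


lemma sin_mul_ge (d x : ℝ) (hd0 : 0 ≤ d) (hd1 : d ≤ 1) (hx0 : 0 ≤ x) (hx : x ≤ π) : d * sin x ≤ sin (d*x) := by
  have h := strictConcaveOn_sin_Icc.concaveOn.2 (⟨le_rfl, pi_pos.le⟩ : (0:ℝ) ∈ Icc 0 π) (⟨hx0, hx⟩ : x ∈ Icc 0 π)
    (by linarith : 0 ≤ 1 - d) hd0 (by ring)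
  simpa using h

lemma cos_half_bound (d : ℝ) (hd0 : 0 ≤ d) (hd1 : d ≤ 1) : (1-d)*(1+d/2) ≤ cos (d*(π/2)) := by
  have p1 := pi_gt_d4
  have p2 := pi_lt_d4
  by_cases h : d ≤ 0.68
  · have h1 := one_sub_sq_div_two_le_cos (x := d*(π/2))
    have h2 : π^2 ≤ 9.8698 := by nlinarith
    nlinarith [mul_nonneg hd0 hd0, mul_nonneg hd0 (sub_nonneg.2 h)]
  · push Not at h
    have hcs : cos (d*(π/2)) = sin ((1-d)*(π/2)) := by
      rw [← cos_pi_div_two_sub]; congr 1; ring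
    rw [hcs]
    rcases eq_or_lt_of_le hd1 with h1 | h1
    · subst h1; simp
    · set e := 1 - d with he
      have he0 : 0 < e := by linarith
      have h3 := sin_gt_sub_cube (x := e*(π/2)) (by positivity)
      have hp : π^3 ≤ 31.1 := by
        have : π^2 ≤ 9.8698 := by nlinarith
        nlinarith
      have : (1 + d/2) ≤ π/2 - (π/2)^3 * e^2/4 := by
        have h5 : d = 1 - e := by linarith
        have h6 : e ≤ 0.32 := by norm_num at h ⊢; linarith
        rw [h5]
        have h7 : π^3 * e^2 ≤ 31.1 * e^2 := mul_le_mul_of_nonneg_right hp (sq_nonneg _)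
        nlinarith
      nlinarith

lemma rpow_le_affine (d x : ℝ) (hd0 : 0 ≤ d) (hd1 : d ≤ 1) (hx : 0 < x) : x^d ≤ 1 - d + d*x := by
  have h := rpow_one_add_le_one_add_mul_self (s := x-1) (by linarith) hd0 hd1
  rw [show 1 + (x-1) = x by ring] at h
  linarith

lemma trig_pos {s : ℝ} (h : s ∈ Ioo 0 (π/2)) : 0 < sin s ∧ 0 < cos s :=
  ⟨sin_pos_of_pos_of_lt_pi h.1 (by linarith [h.2, pi_pos]), cos_pos_of_mem_Ioo ⟨by linarith [h.1, pi_pos], h.2⟩⟩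

lemma lin_deriv_sin (k s : ℝ) : HasDerivAt (fun x => sin (k*x)) (k * cos (k*s)) s := by
  have := ((hasDerivAt_id s).const_mul k).sin
  refine this.congr_deriv ?_
  simp [mul_comm]

lemma lin_deriv_cos (k s : ℝ) : HasDerivAt (fun x => cos (k*x)) (-(k * sin (k*s))) s := by
  have := ((hasDerivAt_id s).const_mul k).cos
  refine this.congr_deriv ?_
  simp [mul_comm]

lemma K1_ineq (d s : ℝ) (hd0 : 0 < d) (hd1 : d ≤ 1) (hs : s ∈ Ioo 0 (π/2)) :
    (2+d)*(cos s)^d*sin s^3 ≤ sin ((1+d)*s)*(1+sin s^2) - (1+d)*sin s*cos s*cos ((1+d)*s) := by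
  obtain ⟨S0, C0⟩ := trig_pos hs
  have e1 : sin ((1+d)*s) = sin s * cos (d*s) + cos s * sin (d*s) := by
    rw [show (1+d)*s = s + d*s by ring, sin_add]
  have e2 : cos ((1+d)*s) = cos s * cos (d*s) - sin s * sin (d*s) := by
    rw [show (1+d)*s = s + d*s by ring, cos_add]
  have hsc := sin_sq_add_cos_sq s
  have e3 : sin ((1+d)*s)*(1+sin s^2) - (1+d)*sin s*cos s*cos ((1+d)*s) =
     2*sin s^3*cos (d*s) + (2+d)*sin s^2*cos s*sin (d*s) + cos s*(sin (d*s) - d*(sin s*cos s*cos (d*s))) := by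
    rw [e1, e2]
    have : cos s^2 = 1 - sin s^2 := by linarith
    linear_combination (-(cos (d*s) * sin s)) * hsc
  rw [e3]
  have b1 := sin_mul_ge d s hd0.le hd1 hs.1.le (by linarith [hs.2, pi_pos])
  have b2 : sin s*cos s*cos (d*s) ≤ sin s := by
    have h1 : cos s * cos (d*s) ≤ 1 := by
      have := cos_le_one s
      have := cos_le_one (d*s)
      nlinarith
    nlinarith
  have b3 : 0 ≤ cos s*(sin (d*s) - d*(sin s*cos s*cos (d*s))) := by
    apply mul_nonneg C0.le
    nlinarith
  have b4 := rpow_le_affine d (cos s) hd0.le hd1 C0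
  have b5 : (1-d)*(1+d/2) ≤ cos (d*s) := by
    refine (cos_half_bound d hd0.le hd1).trans ?_
    apply cos_le_cos_of_nonneg_of_le_pi (by have := hs.1; positivity)
    · nlinarith [pi_pos]
    · have := hs.2; nlinarith
  have S3 : 0 < sin s^3 := by positivity
  have b6 : (2+d)*(cos s)^d*sin s^3 ≤ (2+d)*(1-d+d*cos s)*sin s^3 := by gcongr
  have b7 : (2+d)*sin s^2*cos s*(d*sin s) ≤ (2+d)*sin s^2*cos s*sin (d*s) := by gcongr
  have b8 : sin s^3*((1-d)*(1+d/2)) ≤ sin s^3 * cos (d*s) := by gcongr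
  nlinarith

noncomputable def Kf (d κ s : ℝ) : ℝ := cos s^2*(sin ((1+d)*s)/sin s - κ*(cos s)^d)

lemma K_anti (d κ x y : ℝ) (hd0 : 0 < d) (hd1 : d ≤ 1) (hκ : κ ≤ 1) (hx : 0 < x) (hxy : x ≤ y) (hy : y < π/2) :
    Kf d κ y ≤ Kf d κ x := by
  have h1 : Kf d 1 y ≤ Kf d 1 x := by
    apply anti_helper (f := Kf d 1) (f' := fun s => 
      2*cos s*(-sin s)*(sin ((1+d)*s)/sin s - 1*(cos s)^d) + cos s^2 * (((1+d)*cos ((1+d)*s)*sin s - sin ((1+d)*s)*cos s)/sin s^2 - 1*(-sin s*d*(cos s)^(d-1)))) hxy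
    · intro s hs
      obtain ⟨S0, C0⟩ := trig_pos (s := s) ⟨by linarith [hs.1], by linarith [hs.2]⟩
      have a1 := (hasDerivAt_cos s).fun_pow 2
      have a2 := (lin_deriv_sin (1+d) s).div (hasDerivAt_sin s) S0.ne'
      have a3 := ((hasDerivAt_cos s).rpow_const (p := d) (Or.inl C0.ne')).const_mul 1
      have a4 := a1.mul (a2.sub a3)
      refine a4.congr_deriv ?_
      simp
    · intro s hs
      have hs' : s ∈ Ioo 0 (π/2) := ⟨by linarith [hs.1], by linarith [hs.2]⟩
      obtain ⟨S0, C0⟩ := trig_pos hs'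
      have h := K1_ineq d s hd0 hd1 hs'
      have e : (cos s)^d = (cos s)^(d-1) * cos s := by
        rw [← rpow_add_one C0.ne']; congr 1; ring
      have hsc := sin_sq_add_cos_sq s
      have key : 2*cos s*(-sin s)*(sin ((1+d)*s)/sin s - 1*(cos s)^d) + cos s^2 * (((1+d)*cos ((1+d)*s)*sin s - sin ((1+d)*s)*cos s)/sin s^2 - 1*(-sin s*d*(cos s)^(d-1))) = 
        cos s / sin s^2 * ((2+d)*(cos s)^d*sin s^3 - (sin ((1+d)*s)*(1+sin s^2) - (1+d)*sin s*cos s*cos ((1+d)*s))) := by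
        rw [e]
        field_simp
        have : cos s^2 = 1 - sin s^2 := by linarith
        ring_nf
        rw [this]
        ring
      rw [key]
      apply mul_nonpos_of_nonneg_of_nonpos (by positivity) (by linarith)
  have h2 : cos y ^2 * (cos y)^d ≤ cos x ^2 * (cos x)^d := by
    have c1 := (trig_pos (s := y) ⟨by linarith, hy⟩).2
    have c2 : cos y ≤ cos x := cos_le_cos_of_nonneg_of_le_pi hx.le (by linarith [pi_pos]) hxy
    gcongr
  have e : ∀ s, Kf d κ s = Kf d 1 s + (1-κ)*(cos s^2*(cos s)^d) := by
    intro s; unfold Kf; ring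
  rw [e, e]
  have := mul_le_mul_of_nonneg_left h2 (by linarith : 0 ≤ 1 - κ)
  linarith

lemma r_mono (l x y : ℝ) (hl0 : 0 ≤ l) (hl1 : l ≤ 1) (hx : 0 < x) (hxy : x ≤ y) (hy : y < π/2) :
    sin (l*x)/sin x ≤ sin (l*y)/sin y := by
  apply mono_helper (f := fun s => sin (l*s)/sin s) (f' := fun s => (l*cos (l*s)*sin s - sin (l*s)*cos s)/sin s^2) hxy
  · intro s hs
    obtain ⟨S0, C0⟩ := trig_pos (s := s) ⟨by linarith [hs.1], by linarith [hs.2]⟩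
    exact (lin_deriv_sin l s).div (hasDerivAt_sin s) S0.ne'
  · intro s hs
    apply div_nonneg _ (sq_nonneg _)
    have hs0 : 0 ≤ s := by linarith [hs.1]
    have := mono_helper (f := fun s => l*cos (l*s)*sin s - sin (l*s)*cos s) 
      (f' := fun s => (1-l^2)*(sin (l*s)*sin s)) hs0 ?_ ?_
    · simpa using this
    · intro z _
      have := (((lin_deriv_cos l z).const_mul l).mul (hasDerivAt_sin z)).sub ((lin_deriv_sin l z).mul (hasDerivAt_cos z))
      refine this.congr_deriv ?_
      ring
    · intro z hz
      have z1 := (trig_pos (s := z) ⟨hz.1, by linarith [hz.2, hs.2]⟩).1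
      have z2 : 0 ≤ sin (l*z) := sin_nonneg_of_nonneg_of_le_pi (mul_nonneg hl0 hz.1.le) (by nlinarith [hz.1, hz.2, hs.2, pi_pos])
      have : 0 ≤ 1 - l^2 := by nlinarith
      positivity

lemma r_le_one (l x : ℝ) (hl0 : 0 ≤ l) (hl1 : l ≤ 1) (hx : x ∈ Ioo 0 (π/2)) : 0 ≤ sin (l*x)/sin x ∧ sin (l*x)/sin x ≤ 1 := by
  obtain ⟨S0, C0⟩ := trig_pos hx
  have h1 : l*x ≤ x := by nlinarith [hx.1]
  have h0 : 0 ≤ l*x := mul_nonneg hl0 hx.1.le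
  refine ⟨div_nonneg (sin_nonneg_of_nonneg_of_le_pi h0 (by linarith [hx.2, pi_pos])) S0.le, ?_⟩
  rw [div_le_one S0]
  exact sin_le_sin_of_le_of_le_pi_div_two (by linarith [pi_pos]) hx.2.le h1

/-- κ ≤ 1 -/
lemma kappa_le (d σ : ℝ) (hd0 : 0 < d) (hd1 : d ≤ 1) (hσ : σ ∈ Ioo 0 (π/2)) :
    (2-d) * sin σ * (cos σ)^(1-d) ≤ sin ((2-d)*σ) := by
  set g := 2 - d with hg
  have hm : ∀ x ∈ Ioo 0 σ, sin (g*x)/sin x ≤ sin (g*σ)/(sin σ * (cos σ)^(1-d)) := by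
    intro x hx
    have hx' : x ∈ Ioo 0 (π/2) := ⟨hx.1, by linarith [hx.2, hσ.2]⟩
    have h1 : sin (g*x) * (cos x)^(d-1) /sin x ≤ sin (g*σ) * (cos σ)^(d-1) /sin σ := by
      apply mono_helper (f := fun s => sin (g*s) * (cos s)^(d-1) /sin s) (f' := fun s =>
        ((g*cos (g*s) * (cos s)^(d-1) + sin (g*s)*(-sin s*(d-1)*(cos s)^(d-1-1)))*sin s - sin (g*s) * (cos s)^(d-1)*cos s)/sin s^2) hx.2.le
      · intro s hs
        obtain ⟨S0, C0⟩ := trig_pos (s := s) ⟨by linarith [hs.1, hx.1], by linarith [hs.2, hσ.2]⟩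
        have a3 := ((hasDerivAt_cos s).rpow_const (p := d-1) (Or.inl C0.ne'))
        exact ((lin_deriv_sin g s).mul a3).div (hasDerivAt_sin s) S0.ne'
      · intro s hs
        have hs' : s ∈ Ioo 0 (π/2) := ⟨by linarith [hs.1, hx.1], by linarith [hs.2, hσ.2]⟩
        obtain ⟨S0, C0⟩ := trig_pos hs'
        apply div_nonneg _ (sq_nonneg _)
        have e : (cos s)^(d-1) = (cos s)^(d-1-1) * cos s := by
          rw [← rpow_add_one C0.ne']; congr 1; ring
        have e2 : (g*cos (g*s) * (cos s)^(d-1) + sin (g*s)*(-sin s*(d-1)*(cos s)^(d-1-1)))*sin s - sin (g*s) * (cos s)^(d-1)*cos s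
          = (cos s)^(d-1-1) * (g/2 * sin (d*s) - d/2 * sin (g*s)) := by
          rw [e, show d*s = 2*s - g*s by rw [hg]; ring, sin_sub, sin_two_mul, cos_two_mul']
          have hsc := sin_sq_add_cos_sq s
          have hd' : d = 2 - g := by rw [hg]; ring
          rw [hd']
          have : cos s^2 = 1 - sin s^2 := by linarith
          ring_nf
          rw [this]; ring
        rw [e2]
        have p := rpow_pos_of_pos C0 (d-1-1)
        apply mul_nonneg p.le
        have hg0 : g ≠ 0 := by linarith
        have hgd : sin (d*s) = sin ((d/g)*(g*s)) := by
          congr 1; field_simp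
        have hg1 : 1 ≤ g := by linarith
        have := sin_mul_ge (d/g) (g*s) (by positivity) (by rw [div_le_one (by linarith)]; linarith) (mul_nonneg (by linarith) hs'.1.le) (by nlinarith [hs'.1, hs'.2, pi_pos])
        rw [← hgd] at this
        have h3 : g * (d/g*sin (g*s)) = d * sin (g*s) := by field_simp
        nlinarith
    obtain ⟨S0, C0⟩ := trig_pos hx'
    have h2 : sin (g*x)/sin x ≤ sin (g*x) * (cos x)^(d-1) /sin x := by
      have h0 : 0 ≤ sin (g*x) := sin_nonneg_of_nonneg_of_le_pi (mul_nonneg (by linarith) hx'.1.le) (by nlinarith [hx'.1, hx'.2, pi_pos])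
      have : 1 ≤ (cos x)^(d-1) := one_le_rpow_of_pos_of_le_one_of_nonpos C0 (cos_le_one x) (by linarith)
      gcongr
      nlinarith
    refine h2.trans (h1.trans (le_of_eq ?_))
    have C1 := (trig_pos hσ).2
    rw [show d - 1 = -(1-d) by ring, rpow_neg C1.le]
    field_simp
  have hlim : g ≤ sin (g*σ)/(sin σ * (cos σ)^(1-d)) := by
    have t : Tendsto (fun x : ℝ => g - g^3*x^2/4) (nhdsWithin 0 (Ioi 0)) (nhds g) := by
      apply tendsto_nhdsWithin_of_tendsto_nhds
      have : Continuous (fun x : ℝ => g - g^3*x^2/4) := by fun_prop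
      have := this.tendsto 0
      simpa using this
    refine le_of_tendsto t ?_
    have hmin : 0 < min σ (1/2) := lt_min hσ.1 (by norm_num)
    filter_upwards [Ioo_mem_nhdsGT hmin] with x hx
    have hx1 : x < σ := lt_of_lt_of_le hx.2 (min_le_left _ _)
    have hx2 : x < 1/2 := lt_of_lt_of_le hx.2 (min_le_right _ _)
    refine le_trans ?_ (hm x ⟨hx.1, hx1⟩)
    have S0 := (trig_pos (s := x) ⟨hx.1, by linarith [hσ.2]⟩).1
    have h1 := sin_gt_sub_cube (x := g*x) (mul_pos (by linarith) hx.1)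
    have h2 := sin_le hx.1.le
    rw [le_div_iff₀ S0]
    have h3 : 0 ≤ g - g^3*x^2/4 := by
      have a1 : g^2 ≤ 4 := by nlinarith
      have a2 : x^2 ≤ 1 := by nlinarith [hx.1]
      have a3 : g^2*x^2 ≤ 4 := by nlinarith [sq_nonneg x, sq_nonneg g]
      have : g - g^3*x^2/4 = g*(1 - g^2*x^2/4) := by ring
      rw [this]
      apply mul_nonneg <;> linarith
    have h4 : (g - g^3*x^2/4)*sin x ≤ (g - g^3*x^2/4)*x := mul_le_mul_of_nonneg_left h2 h3
    have h5 : 0 ≤ g^3*x^3 := by have := hx.1; have : 0 ≤ g := by linarith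
                                positivity
    have h6 : (g*x)^3/6 = g^3*x^3/6 := by ring
    have h7 : (g - g^3*x^2/4)*x = g*x - g^3*x^3/4 := by ring
    linarith
  obtain ⟨S0, C0⟩ := trig_pos hσ
  have p := rpow_pos_of_pos C0 (1-d)
  rw [le_div_iff₀ (by positivity)] at hlim
  linarith


noncomputable def Nf (d κ s : ℝ) : ℝ := 1 + (κ*(cos s)^d)^2 - 2*(κ*(cos s)^d)*cos (d*s)

noncomputable def Df (d Q0 s : ℝ) : ℝ := 1 + (Q0*(cos s)^(-(2-d)))^2 - 2*(Q0*(cos s)^(-(2-d)))*cos ((2-d)*s)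

noncomputable def Qf (d Q0 s : ℝ) : ℝ := Q0*(cos s)^(-(2-d))

noncomputable def Den (d Q0 s : ℝ) : ℝ := Qf d Q0 s + sin ((1-d)*s)/sin s

noncomputable def Wf (d Q0 s : ℝ) : ℝ := 2*(2-d)*Qf d Q0 s * sin s/cos s

lemma Nf_deriv (d κ s : ℝ) (hs : s ∈ Ioo (-(π/2)) (π/2)) :
    HasDerivAt (Nf d κ) (2*d*(κ*(cos s)^d)/cos s*(sin ((1+d)*s) - κ*(cos s)^d*sin s)) s := by
  have C0 := cos_pos_of_mem_Ioo hs
  have a1 := ((hasDerivAt_cos s).rpow_const (p := d) (Or.inl C0.ne')).const_mul κ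
  have a2 := (((a1.fun_pow 2).const_add 1).sub ((a1.const_mul 2).mul (lin_deriv_cos d s)))
  refine a2.congr_deriv ?_
  have e : (cos s)^d = (cos s)^(d-1) * cos s := by
    rw [← rpow_add_one C0.ne']; congr 1; ring
  rw [show (1+d)*s = s + d*s by ring, sin_add, e]
  field_simp
  ring

lemma Df_deriv (d Q0 s : ℝ) (hs : s ∈ Ioo (-(π/2)) (π/2)) :
    HasDerivAt (Df d Q0) (2*(2-d)*Qf d Q0 s/cos s*(Qf d Q0 s*sin s + sin ((1-d)*s))) s := by
  have C0 := cos_pos_of_mem_Ioo hs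
  have a1 := ((hasDerivAt_cos s).rpow_const (p := -(2-d)) (Or.inl C0.ne')).const_mul Q0
  have a2 := (((a1.fun_pow 2).const_add 1).sub ((a1.const_mul 2).mul (lin_deriv_cos (2-d) s)))
  refine a2.congr_deriv ?_
  have e : (cos s)^(-(2-d)) = (cos s)^(-(2-d)-1) * cos s := by
    rw [← rpow_add_one C0.ne']; congr 1; ring
  unfold Qf
  rw [show (1-d)*s = (2-d)*s - s by ring, sin_sub, e]
  field_simp
  ring

lemma Qf_mono (d Q0 x y : ℝ) (hd1 : d ≤ 1) (hQ : 0 < Q0) (hx : 0 ≤ x) (hxy : x ≤ y) (hy : y < π/2) :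
    Qf d Q0 x * (1 - cos y/cos x) ≤ Qf d Q0 y - Qf d Q0 x ∧ Qf d Q0 y * (1 - cos y/cos x) ≤ Qf d Q0 y - Qf d Q0 x
    ∧ Q0 ≤ Qf d Q0 x ∧ Qf d Q0 x ≤ Qf d Q0 y := by
  have Cy : 0 < cos y := cos_pos_of_mem_Ioo ⟨by linarith [pi_pos], hy⟩
  have Cx : 0 < cos x := cos_pos_of_mem_Ioo ⟨by linarith [pi_pos], by linarith⟩
  have hc : cos y ≤ cos x := cos_le_cos_of_nonneg_of_le_pi hx (by linarith [pi_pos]) hxy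
  have hr : cos y / cos x ≤ 1 := (div_le_one Cx).2 hc
  have hr0 : 0 < cos y / cos x := by positivity
  have e : Qf d Q0 x = Qf d Q0 y * (cos y/cos x)^(2-d) := by
    unfold Qf
    rw [div_rpow Cy.le Cx.le, rpow_neg Cx.le, rpow_neg Cy.le]
    have := rpow_pos_of_pos Cy (2-d)
    field_simp
  have h1 : (cos y/cos x)^(2-d) ≤ cos y/cos x := by
    have := rpow_le_rpow_of_exponent_ge hr0 hr (by linarith : 1 ≤ 2 - d)
    simpa using this
  have h2 : Q0 ≤ Qf d Q0 x := by
    unfold Qf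
    have := one_le_rpow_of_pos_of_le_one_of_nonpos Cx (cos_le_one x) (by linarith : -(2-d) ≤ 0)
    nlinarith
  have Qy : 0 < Qf d Q0 y := by unfold Qf; positivity
  have h3 : Qf d Q0 y * (1 - cos y/cos x) ≤ Qf d Q0 y - Qf d Q0 x := by
    rw [e]; nlinarith
  have h4 : Qf d Q0 x ≤ Qf d Q0 y := by
    rw [e]; nlinarith
  refine ⟨le_trans ?_ h3, h3, h2, h4⟩
  nlinarith

lemma cos_diff (x y t0 : ℝ) (h0 : 0 ≤ x) (hxy : x ≤ y) (hy : y ≤ π/2) (ht0 : 0 ≤ t0) (ht : t0 ≤ sin ((x+y)/2)) :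
    t0*(y-x)/2 ≤ cos x - cos y := by
  have e : cos x - cos y = 2*sin ((x+y)/2)*sin ((y-x)/2) := by
    rw [cos_sub_cos, show (x-y)/2 = -((y-x)/2) by ring, sin_neg]; ring
  have h1 : (y-x)/4 ≤ sin ((y-x)/2) := by
    have := mul_le_sin (x := (y-x)/2) (by linarith) (by linarith)
    refine le_trans ?_ this
    have : 1/2 ≤ 2/π := by rw [div_le_div_iff₀ (by norm_num) pi_pos]; linarith [pi_le_four]
    nlinarith
  rw [e]
  have : t0*((y-x)/4) ≤ sin ((x+y)/2)*sin ((y-x)/2) := by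
    apply mul_le_mul ht h1 (by linarith) (by linarith)
  linarith

lemma Df_le (d Q0 s : ℝ) (hQ : 0 ≤ Qf d Q0 s) : Df d Q0 s ≤ (1 + Qf d Q0 s)^2 := by
  have := neg_one_le_cos ((2-d)*s)
  have e : Df d Q0 s = 1 + Qf d Q0 s ^2 - 2*Qf d Q0 s * cos ((2-d)*s) := rfl
  rw [e]; nlinarith

lemma gap_core (d κ Q0 E s : ℝ) (hd1 : d ≤ 1) (hQ : 0 < Q0)
   (hs : s ∈ Ioo 0 (π/2)) :
    E * (2*(2-d)*Qf d Q0 s/cos s*(Qf d Q0 s*sin s + sin ((1-d)*s))) - (2*d*(κ*(cos s)^d)/cos s*(sin ((1+d)*s) - κ*(cos s)^d*sin s))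
     = Wf d Q0 s * (E * Den d Q0 s - d*κ/((2-d)*Q0)*Kf d κ s) := by
  obtain ⟨S0, C0⟩ := trig_pos hs
  unfold Wf Den Kf Qf
  have hg : (2 - d) ≠ 0 := by linarith
  have e : (cos s)^(-(2-d)) = (cos s)^d * (cos s ^2)⁻¹ := by
    rw [show -(2-d) = d - (2:ℕ) by push_cast; ring, rpow_sub_natCast C0.ne']
    rfl
  rw [e]
  have p := rpow_pos_of_pos C0 d
  field_simp

lemma gap_alg (E Q0 t0 Q y W De Dv B : ℝ) (hE : 0 < E) (hQ : 0 < Q0) (hQ1 : Q0 ≤ 1) (ht0 : 0 < t0) (ht1 : t0 ≤ 1)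
    (hQQ : Q0 ≤ Q) (hy : 0 < y) (hy2 : y ≤ 2) (hDe : De ≤ 1 + Q) (hDv : Dv ≤ (1+Q)^2) (hW : 2*Q*t0 ≤ W)
    (hB : E*(Q*(t0*y/2)) ≤ B) : 0 ≤ W * B - E*(Q0^2*t0^2/48)*(W*De*y^2 + Dv*(2*y)) := by
  have Qp : 0 < Q := by linarith
  have hQ1' : Q0*(1+Q) ≤ 2*Q := by nlinarith
  have hW0 : 0 ≤ W := le_trans (by positivity) hW
  have f1 : De * y^2 ≤ (1+Q)*(2*y) := by
    have : y^2 ≤ 2*y := by nlinarith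
    apply mul_le_mul hDe this (sq_nonneg _) (by linarith)
  have f2 : Dv * (2*y) ≤ (1+Q)^2*(2*y) := by gcongr
  have z : Q0^2*t0^2*(1+Q) ≤ 2*Q*t0 := by
    have z1 : Q0^2*t0^2 = (Q0*t0)*(Q0*t0) := by ring
    have z2 : Q0*t0 ≤ 1 := by nlinarith
    have z3 : (Q0*t0)*(Q0*t0) ≤ (Q0*t0)*1 := mul_le_mul_of_nonneg_left z2 (by positivity)
    have z4 : (Q0*t0)*(Q0*t0)*(1+Q) ≤ (Q0*t0)*1*(1+Q) := mul_le_mul_of_nonneg_right z3 (by linarith)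
    have z5 := mul_le_mul_of_nonneg_right hQ1' ht0.le
    rw [z1]; linarith
  have f3 : E*(Q0^2*t0^2/48)*(W*De*y^2) ≤ W*(E*(Q*(t0*y/4))) := by
    have h1 : E*(Q0^2*t0^2/48)*W*(De*y^2) ≤ E*(Q0^2*t0^2/48)*W*((1+Q)*(2*y)) := by gcongr
    have h2 : E*W*y/24*(Q0^2*t0^2*(1+Q)) ≤ E*W*y/24*(2*Q*t0) := by gcongr
    have h3 : 0 ≤ E*W*y*(Q*t0) := by positivity
    linarith
  have f4 : E*(Q0^2*t0^2/48)*(Dv*(2*y)) ≤ W*(E*(Q*(t0*y/4))) := by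
    have h1 : E*(Q0^2*t0^2/48)*(Dv*(2*y)) ≤ E*(Q0^2*t0^2/48)*((1+Q)^2*(2*y)) := by gcongr
    have h2 : (Q0*(1+Q))^2 ≤ (2*Q)^2 := by
      apply pow_le_pow_left₀ (by positivity) hQ1'
    have h3 : E*t0^2/24*y*(Q0*(1+Q))^2 ≤ E*t0^2/24*y*(2*Q)^2 := by gcongr
    have h4 : 2*Q*t0*(E*(Q*(t0*y/4))) ≤ W*(E*(Q*(t0*y/4))) := by gcongr
    have h5 : 0 ≤ E*t0^2*y*Q^2 := by positivity
    linarith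
  have f5 := mul_le_mul_of_nonneg_left hB hW0
  linarith

set_option maxHeartbeats 1600000 in
lemma gap (d κ Q0 E σ t0 : ℝ) (hd0 : 0 < d) (hd1 : d ≤ 1) (hκ0 : 0 < κ) (hκ : κ ≤ 1) (hQ : 0 < Q0) (hQ1 : Q0 ≤ 1)
   (hE : 0 < E) (hσ : σ ∈ Ioo 0 (π/2)) (hρ : Qf d Q0 σ ≤ 1) (hND : Nf d κ σ = E * Df d Q0 σ)
   (hF : d*κ/((2-d)*Q0)*Kf d κ σ = E * Den d Q0 σ) (ht0 : 0 < t0) (ht : t0 ≤ sin (σ/2)) (s : ℝ) (hs0 : 0 ≤ s) (hs : s < π/2) :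
   Nf d κ s ≤ E * Df d Q0 s * (1 - Q0^2*t0^2/48*(s-σ)^2) := by
  have ht1 : t0 ≤ 1 := ht.trans (sin_le_one _)
  have hA : 0 ≤ d*κ/((2-d)*Q0) := by have : 0 < 2 - d := by linarith
                                     positivity
  have p4 := pi_le_four
  rcases le_total σ s with h | h
  · -- s ≥ σ
    set c := E*(Q0^2*t0^2/48) with hc
    have hc0 : 0 < c := by positivity
    have main := mono_helper (f := fun s => E * Df d Q0 s - Nf d κ s - c*(Df d Q0 s * (s-σ)^2))
      (f' := fun s => E * (2*(2-d)*Qf d Q0 s/cos s*(Qf d Q0 s*sin s + sin ((1-d)*s))) - (2*d*(κ*(cos s)^d)/cos s*(sin ((1+d)*s) - κ*(cos s)^d*sin s))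
       - c*((2*(2-d)*Qf d Q0 s/cos s*(Qf d Q0 s*sin s + sin ((1-d)*s))) * (s-σ)^2 + Df d Q0 s * (2*(s-σ)))) h ?_ ?_
    · simp only [hND] at main
      have : c = E*(Q0^2*t0^2/48) := rfl
      rw [this] at main
      nlinarith
    · intro x hx
      have hx' : x ∈ Ioo (-(π/2)) (π/2) := ⟨by linarith [hx.1, hσ.1, pi_pos], by linarith [hx.2]⟩
      have a1 := (((hasDerivAt_id x).sub_const σ).fun_pow 2)
      have a2 := (((Df_deriv d Q0 x hx').const_mul E).sub (Nf_deriv d κ x hx')).sub (((Df_deriv d Q0 x hx').mul a1).const_mul c)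
      refine a2.congr_deriv ?_
      simp
    · intro x hx
      have hx' : x ∈ Ioo 0 (π/2) := ⟨by linarith [hx.1, hσ.1], by linarith [hx.2]⟩
      obtain ⟨S0, C0⟩ := trig_pos hx'
      obtain ⟨_, q2, q3, q4⟩ := Qf_mono d Q0 σ x hd1 hQ hσ.1.le hx.1.le hx'.2
      have hx0 : 0 < x - σ := by linarith [hx.1]
      have hx2 : x - σ ≤ 2 := by linarith [hx'.2, hσ.1]
      set Q := Qf d Q0 x with hQd
      have Q00 : Q0 ≤ Q := q3.trans q4
      have gc := gap_core d κ Q0 E x hd1 hQ hx'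
      rw [← hQd] at gc
      rw [gc]
      have eD : 2*(2-d)*Q/cos x*(Q*sin x + sin ((1-d)*x)) = Wf d Q0 x * Den d Q0 x := by
        unfold Wf Den; rw [← hQd]; field_simp
      rw [eD]
      have hK := K_anti d κ σ x hd0 hd1 hκ hσ.1 hx.1.le hx'.2
      have hr := r_mono (1-d) σ x (by linarith) (by linarith) hσ.1 hx.1.le hx'.2
      have hr1 := r_le_one (1-d) x (by linarith) (by linarith) hx'
      have hD := Df_le d Q0 x (by linarith)
      rw [← hQd] at hD
      have hDenle : Den d Q0 x ≤ 1 + Q := by unfold Den; rw [← hQd]; linarith [hr1.2]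
      -- bracket
      have cσ := (trig_pos hσ).2
      have hcd : t0*(x-σ)/2 ≤ cos σ - cos x := cos_diff σ x t0 hσ.1.le hx.1.le hx'.2.le ht0.le (ht.trans
        (sin_le_sin_of_le_of_le_pi_div_two (by linarith [hσ.1]) (by linarith [hσ.2, hx'.2]) (by linarith [hx.1, hσ.1])))
      have hcc : cos σ - cos x ≤ 1 - cos x/cos σ := by
        have : cos σ * (1 - cos x/cos σ) = cos σ - cos x := by field_simp
        have h1 : cos x/cos σ ≤ 1 := by
          rw [div_le_one cσ]
          have : 0 ≤ t0*(x-σ)/2 := by positivity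
          linarith
        have h2 := mul_nonneg (sub_nonneg.2 (cos_le_one σ)) (sub_nonneg.2 h1)
        linarith
      have b1 : Q*(t0*(x-σ)/2) ≤ Q - Qf d Q0 σ := by
        have := mul_le_mul_of_nonneg_left (hcd.trans hcc) (by linarith : 0 ≤ Q)
        linarith
      have b2 : E*(Q*(t0*(x-σ)/2)) ≤ E * Den d Q0 x - d*κ/((2-d)*Q0)*Kf d κ x := by
        have h1 := mul_le_mul_of_nonneg_left hK hA
        rw [hF] at h1
        have h2 : E * (Q - Qf d Q0 σ) ≤ E*(Den d Q0 x - Den d Q0 σ) := by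
          apply mul_le_mul_of_nonneg_left _ hE.le
          unfold Den; rw [← hQd]; linarith
        have h3 := mul_le_mul_of_nonneg_left b1 hE.le
        linarith
      have hW : 2*Q*t0 ≤ Wf d Q0 x := by
        unfold Wf
        rw [← hQd]
        have h1 : t0 ≤ sin x := ht.trans (sin_le_sin_of_le_of_le_pi_div_two (by linarith [hσ.1]) (by linarith [hσ.2, hx'.2]) (by linarith [hx.1, hσ.1]))
        rw [le_div_iff₀ C0]
        have h2 : 2*Q*t0 * cos x ≤ 2*Q*t0 * 1 := by
          apply mul_le_mul_of_nonneg_left (cos_le_one x); have : 0 < Q := by linarith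
          positivity
        have h3 : 2*Q*t0 ≤ 2*Q*sin x := by nlinarith
        have h4 : 2*Q*sin x ≤ 2*(2-d)*Q*sin x := by
          have : 0 ≤ Q*sin x := by have : 0 < Q := by linarith
                                   positivity
          nlinarith
        linarith
      exact gap_alg E Q0 t0 Q (x-σ) _ _ _ _ hE hQ hQ1 ht0 ht1 Q00 hx0 hx2 hDenle hD hW b2
  · -- s ≤ σ
    set m := E*Q0^2*t0/2 with hm
    have main := anti_helper (f := fun s => E * Df d Q0 s - Nf d κ s - m*((σ-s)^2*(σ+2*s)/6))
      (f' := fun s => E * (2*(2-d)*Qf d Q0 s/cos s*(Qf d Q0 s*sin s + sin ((1-d)*s))) - (2*d*(κ*(cos s)^d)/cos s*(sin ((1+d)*s) - κ*(cos s)^d*sin s))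
       + m*(s*(σ-s))) h ?_ ?_
    · simp only [hND] at main
      have hQs := (Qf_mono d Q0 s σ hd1 hQ hs0 h hσ.2)
      have hD := Df_le d Q0 s (by linarith [hQs.2.2.1])
      have hD4 : Df d Q0 s ≤ 4 := by
        have : Qf d Q0 s ≤ 1 := by linarith [hQs.2.2.2]
        nlinarith [hQs.2.2.1]
      have hσt : t0 ≤ σ := ht.trans ((sin_le (by linarith [hσ.1])).trans (by linarith [hσ.1]))
      have h1 : m*((σ-s)^2*t0/6) ≤ m*((σ-s)^2*(σ+2*s)/6) := by
        gcongr; linarith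
      have h2 : E * (Q0^2*t0^2/48*(s-σ)^2) * Df d Q0 s ≤ E * (Q0^2*t0^2/48*(s-σ)^2) * 4 := by
        gcongr
      have h3 : m*((σ-s)^2*t0/6) = E * (Q0^2*t0^2/48*(s-σ)^2) * 4 := by rw [hm]; ring
      nlinarith
    · intro x hx
      have hx' : x ∈ Ioo (-(π/2)) (π/2) := ⟨by linarith [hx.1, hσ.1, pi_pos], by linarith [hx.2, hσ.2]⟩
      have a1 := ((((hasDerivAt_id x).const_sub σ).fun_pow 2).mul (((hasDerivAt_id x).const_mul 2).const_add σ)).div_const 6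
      have a2 := (((Df_deriv d Q0 x hx').const_mul E).sub (Nf_deriv d κ x hx')).sub (a1.const_mul m)
      refine a2.congr_deriv ?_
      simp only [id]
      ring
    · intro x hx
      have hx' : x ∈ Ioo 0 (π/2) := ⟨by linarith [hx.1], by linarith [hx.2, hσ.2]⟩
      obtain ⟨S0, C0⟩ := trig_pos hx'
      obtain ⟨_, q2, q3, q4⟩ := Qf_mono d Q0 x σ hd1 hQ hx'.1.le hx.2.le hσ.2
      have hx0 : 0 < σ - x := by linarith [hx.2]
      rw [gap_core d κ Q0 E x hd1 hQ hx']
      have hK := K_anti d κ x σ hd0 hd1 hκ hx'.1 hx.2.le hσ.2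
      have hr := r_mono (1-d) x σ (by linarith) (by linarith) hx'.1 hx.2.le hσ.2
      have hcd : t0*(σ-x)/2 ≤ cos x - cos σ := cos_diff x σ t0 hx'.1.le hx.2.le hσ.2.le ht0.le (ht.trans
        (sin_le_sin_of_le_of_le_pi_div_two (by linarith [hσ.1]) (by linarith [hσ.2, hx'.2]) (by linarith [hx'.1])))
      have hcc : cos x - cos σ ≤ 1 - cos σ/cos x := by
        have : cos x * (1 - cos σ/cos x) = cos x - cos σ := by field_simp
        have h1 : cos σ/cos x ≤ 1 := by
          rw [div_le_one C0]
          have : 0 ≤ t0*(σ-x)/2 := by positivity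
          linarith
        have h2 := mul_nonneg (sub_nonneg.2 (cos_le_one x)) (sub_nonneg.2 h1)
        linarith
      have b1 : Q0*(t0*(σ-x)/2) ≤ Qf d Q0 σ - Qf d Q0 x := by
        have h1 : Q0 ≤ Qf d Q0 σ := q3.trans q4
        have h2 : Q0*(t0*(σ-x)/2) ≤ Qf d Q0 σ * (1 - cos σ/cos x) := by
          apply mul_le_mul h1 (hcd.trans hcc) (by positivity) (by linarith)
        linarith
      have b2 : E*(Q0*(t0*(σ-x)/2)) ≤ d*κ/((2-d)*Q0)*Kf d κ x - E * Den d Q0 x := by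
        have h1 := mul_le_mul_of_nonneg_left hK hA
        rw [hF] at h1
        have h2 : E * (Qf d Q0 σ - Qf d Q0 x) ≤ E*(Den d Q0 σ - Den d Q0 x) := by
          apply mul_le_mul_of_nonneg_left _ hE.le
          unfold Den; linarith
        have h3 := mul_le_mul_of_nonneg_left b1 hE.le
        linarith
      have hW : Q0*x ≤ Wf d Q0 x := by
        unfold Wf
        have h1 : x/2 ≤ sin x := by
          have := mul_le_sin (x := x) hx'.1.le hx'.2.le
          refine le_trans ?_ this
          have : 1/2 ≤ 2/π := by rw [div_le_div_iff₀ (by norm_num) pi_pos]; linarith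
          nlinarith [hx'.1]
        have xp := hx'.1
        rw [le_div_iff₀ C0]
        have h2 : Q0*x*cos x ≤ Q0*x*1 := by
          apply mul_le_mul_of_nonneg_left (cos_le_one x); positivity
        have h3 : Q0*x ≤ 2*(Qf d Q0 x*sin x) := by
          have : Q0*(x/2) ≤ Qf d Q0 x*sin x := mul_le_mul q3 h1 (by positivity) (by linarith)
          linarith
        have h4 : 2*(Qf d Q0 x*sin x) ≤ 2*(2-d)*Qf d Q0 x*sin x := by
          have : 0 ≤ Qf d Q0 x*sin x := mul_nonneg (by linarith) S0.le
          nlinarith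
        linarith
      have xp := hx'.1
      have f7 : (Q0*x)*(E*(Q0*(t0*(σ-x)/2))) ≤ Wf d Q0 x * (d*κ/((2-d)*Q0)*Kf d κ x - E * Den d Q0 x) := 
        mul_le_mul hW b2 (by positivity) (le_trans (by positivity) hW)
      have e8 : (Q0*x)*(E*(Q0*(t0*(σ-x)/2))) = m*(x*(σ-x)) := by rw [hm]; ring
      nlinarith


lemma Df_nonneg (d Q0 s : ℝ) : 0 ≤ Df d Q0 s := by
  have e : Df d Q0 s = (1 - Qf d Q0 s * cos ((2-d)*s))^2 + (Qf d Q0 s * sin ((2-d)*s))^2 := by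
    have h := sin_sq_add_cos_sq ((2-d)*s)
    have e : Df d Q0 s = 1 + Qf d Q0 s ^2 - 2*Qf d Q0 s * cos ((2-d)*s) := rfl
    rw [e]
    linear_combination (-(Qf d Q0 s)^2) * h
  rw [e]; positivity

lemma id_ND (d σ : ℝ) :
    sin ((2-d)*σ)^2 + ((2-d)*sin σ*cos σ)^2 - 2*((2-d)*sin σ*cos σ)*sin ((2-d)*σ)*cos (d*σ)
    = sin (d*σ)^2 + (d*sin σ*cos σ)^2 - 2*(d*sin σ*cos σ)*sin (d*σ)*cos ((2-d)*σ) := by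
  have e1 : sin ((2-d)*σ) = 2*sin σ*cos σ*cos (d*σ) - (2*cos σ^2-1)*sin (d*σ) := by
    rw [show (2-d)*σ = 2*σ - d*σ by ring, sin_sub, sin_two_mul, cos_two_mul]
  have e2 : cos ((2-d)*σ) = (2*cos σ^2-1)*cos (d*σ) + 2*sin σ*cos σ*sin (d*σ) := by
    rw [show (2-d)*σ = 2*σ - d*σ by ring, cos_sub, sin_two_mul, cos_two_mul]
  rw [e1, e2]
  have h1 : sin σ^2 = 1 - cos σ^2 := by linarith [sin_sq_add_cos_sq σ]
  have h2 : sin (d*σ)^2 = 1 - cos (d*σ)^2 := by linarith [sin_sq_add_cos_sq (d*σ)]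
  ring_nf
  simp only [h1, h2]
  ring_nf

lemma id_F (d σ : ℝ) :
    sin ((1+d)*σ)*sin ((2-d)*σ) - sin (d*σ)*sin ((1-d)*σ) = 2*sin σ^2*cos σ := by
  rw [show (2-d)*σ = 2*σ - d*σ by ring, sin_sub, sin_two_mul, cos_two_mul, show (1+d)*σ = σ + d*σ by ring,
    show (1-d)*σ = σ - d*σ by ring, sin_add, sin_sub]
  have h1 := sin_sq_add_cos_sq σ
  have h2 := sin_sq_add_cos_sq (d*σ)
  have h1 : cos σ^2 = 1 - sin σ^2 := by linarith 
  have h2 : sin (d*σ)^2 = 1 - cos (d*σ)^2 := by linarith 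
  have h3 : cos σ^3 = cos σ * (1 - sin σ^2) := by rw [← h1]; ring
  ring_nf
  simp only [h3, h2]
  ring_nf

set_option maxHeartbeats 1600000 in
lemma setup (d δ : ℝ) (hd0 : 0 < d) (hd1 : d ≤ 1) (hδ : 0 < δ) (hδ2 : δ < π/2) :
    ∃ l > 0, ∀ σ ∈ Icc δ (π/2-δ), ∃ κ c : ℝ, 0 < κ ∧ κ ≤ 1 ∧ l ≤ c ∧ c < 1 ∧ c^(2-d) ≤ 1 - l ∧
      κ*c^d = ((2-d)*sin σ*cos σ/sin ((2-d)*σ)) * (d*sin σ*cos σ/sin (d*σ))^(d/(2-d)) ∧ κ*c^d ≤ 1 - l ∧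
      l ≤ sin (d*σ)/sin ((2-d)*σ) ∧ 
      ∀ s, 0 ≤ s → s < π/2 → Nf d κ s ≤ (sin (d*σ)/sin ((2-d)*σ))^2 * Df d (c^(2-d)) s * (1 - l*(s-σ)^2) := by
  set t := sin (δ/2) with ht
  have ht0 : 0 < t := sin_pos_of_pos_of_lt_pi (by linarith) (by linarith)
  have ht1 : t ≤ 1 := sin_le_one _
  have hC1 : cos δ < 1 := by
    have := cos_lt_cos_of_nonneg_of_le_pi_div_two le_rfl hδ2.le hδ
    simpa using this
  have hCd : 0 < cos δ := cos_pos_of_mem_Ioo ⟨by linarith, hδ2⟩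
  have hCdd : (cos δ)^d < 1 := rpow_lt_one hCd.le hC1 hd0
  set Q1 := t^4/2 with hQ1
  refine ⟨min (min (t^3/2) (1-cos δ)) (min (min (1-(cos δ)^d) (d*t)) (Q1^2*t^2/48)), ?_, ?_⟩
  · have : 0 < 1 - cos δ := by linarith
    have : 0 < 1-(cos δ)^d := by linarith
    positivity
  intro σ hσ'
  set l := min (min (t^3/2) (1-cos δ)) (min (min (1-(cos δ)^d) (d*t)) (Q1^2*t^2/48)) with hl
  have l1 : l ≤ t^3/2 := (min_le_left _ _).trans (min_le_left _ _)
  have l2 : l ≤ 1 - cos δ := (min_le_left _ _).trans (min_le_right _ _)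
  have l3 : l ≤ 1-(cos δ)^d := (min_le_right _ _).trans ((min_le_left _ _).trans (min_le_left _ _))
  have l4 : l ≤ d*t := (min_le_right _ _).trans ((min_le_left _ _).trans (min_le_right _ _))
  have l5 : l ≤ Q1^2*t^2/48 := (min_le_right _ _).trans (min_le_right _ _)
  have hσ : σ ∈ Ioo 0 (π/2) := ⟨by linarith [hσ'.1], by linarith [hσ'.2]⟩
  have hσ0 := hσ.1
  obtain ⟨S0, C0⟩ := trig_pos hσ
  have g1 : 1 ≤ 2 - d := by linarith
  have g0 : 0 < 2 - d := by linarith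
  have sd : 0 < sin (d*σ) := sin_pos_of_pos_of_lt_pi (by positivity) (by nlinarith [hσ.2, pi_pos])
  have sg : 0 < sin ((2-d)*σ) := sin_pos_of_pos_of_lt_pi (by positivity) (by nlinarith [hσ.2, pi_pos])
  have hts : t ≤ sin (σ/2) := sin_le_sin_of_le_of_le_pi_div_two (by linarith) (by linarith [hσ.2]) (by linarith [hσ'.1])
  have htS : t ≤ sin σ := sin_le_sin_of_le_of_le_pi_div_two (by linarith) (by linarith [hσ.2]) (by linarith [hσ'.1])
  have htC : t ≤ cos σ := by
    rw [← sin_pi_div_two_sub]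
    exact sin_le_sin_of_le_of_le_pi_div_two (by linarith) (by linarith [hσ.1]) (by linarith [hσ'.2])
  have hCδ : cos σ ≤ cos δ := cos_le_cos_of_nonneg_of_le_pi hδ.le (by linarith [hσ.2]) hσ'.1
  set ρ := d*sin σ*cos σ/sin (d*σ) with hρ
  set η := (2-d)*sin σ*cos σ/sin ((2-d)*σ) with hη
  have ρ0 : 0 < ρ := by positivity
  have η0 : 0 < η := by positivity
  have ρC : ρ ≤ cos σ := by
    rw [hρ, div_le_iff₀ sd]
    have := mul_le_mul_of_nonneg_left (sin_mul_ge d σ hd0.le hd1 hσ0.le (by linarith [hσ.2])) C0.le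
    linarith
  have ρ1 : ρ ≤ 1 := ρC.trans (cos_le_one _)
  have ρlow : t^2/2 ≤ ρ := by
    rw [hρ, le_div_iff₀ sd]
    have h1 := sin_le (by positivity : 0 ≤ d*σ)
    have h2 : d*σ ≤ d*2 := by have := hσ.2; have := pi_le_four; nlinarith
    have h3 : t*t ≤ sin σ*cos σ := mul_le_mul htS htC ht0.le S0.le
    have h4 : t^2/2*sin (d*σ) ≤ t^2/2*(d*2) := by gcongr; linarith
    have h5 := mul_le_mul_of_nonneg_left h3 hd0.le
    linarith
  have Cg1 : (cos σ)^(2-d) ≤ 1 := rpow_le_one C0.le (cos_le_one _) g0.le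
  have Cgp := rpow_pos_of_pos C0 (2-d)
  have Cdp := rpow_pos_of_pos C0 d
  have Cglow : t^2 ≤ (cos σ)^(2-d) := by
    have h1 : (cos σ)^(2:ℝ) ≤ (cos σ)^(2-d) := rpow_le_rpow_of_exponent_ge C0 (cos_le_one _) (by linarith)
    rw [rpow_two] at h1
    exact (pow_le_pow_left₀ ht0.le htC 2).trans h1
  set c := ρ^(1/(2-d))*cos σ with hc
  have hcg : c^(2-d) = ρ*(cos σ)^(2-d) := by
    rw [hc, mul_rpow (by positivity) C0.le, ← rpow_mul ρ0.le]
    congr 1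
    rw [one_div_mul_cancel g0.ne', rpow_one]
  have hcd : c^d = ρ^(d/(2-d))*(cos σ)^d := by
    rw [hc, mul_rpow (by positivity) C0.le, ← rpow_mul ρ0.le]
    congr 2
    field_simp
  have ρp1 : ρ^(1/(2-d)) ≤ 1 := rpow_le_one ρ0.le ρ1 (by positivity)
  have c0 : 0 < c := by positivity
  have cC : c ≤ cos σ := mul_le_of_le_one_left C0.le ρp1
  have clow : t^3/2 ≤ c := by
    have h1 : ρ ≤ ρ^(1/(2-d)) := by
      have := rpow_le_rpow_of_exponent_ge ρ0 ρ1 (by rw [div_le_one g0]; exact g1 : 1/(2-d) ≤ 1)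
      simpa using this
    have h2 : t^2/2*t ≤ ρ^(1/(2-d))*cos σ := mul_le_mul (ρlow.trans h1) htC ht0.le (by positivity)
    rw [hc]; linarith
  set κ := η/(cos σ)^d with hκ
  have κ0 : 0 < κ := by positivity
  have κ1 : κ ≤ 1 := by
    have h := kappa_le d σ hd0 hd1 hσ
    rw [hκ, div_le_one Cdp, hη, div_le_iff₀ sg]
    have e : cos σ = (cos σ)^d * (cos σ)^(1-d) := by
      rw [← rpow_add C0]; simp
    calc (2-d)*sin σ*cos σ = (cos σ)^d * ((2-d)*sin σ*(cos σ)^(1-d)) := by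
          nth_rw 1 [e]; ring
      _ ≤ _ := by gcongr
  have hκC : κ*(cos σ)^d = η := by rw [hκ]; field_simp
  have hκc : κ*c^d = η*ρ^(d/(2-d)) := by rw [hcd, ← hκC]; ring
  have cd1 : c^d ≤ (cos δ)^d := rpow_le_rpow c0.le (cC.trans hCδ) hd0.le
  have cdp := rpow_pos_of_pos c0 d
  have Q00 : 0 < c^(2-d) := by positivity
  have hQle : c^(2-d) ≤ cos σ := by
    rw [hcg]; exact (mul_le_of_le_one_right ρ0.le Cg1).trans ρC
  have hQlow : Q1 ≤ c^(2-d) := by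
    rw [hcg, hQ1]
    have : t^2/2*t^2 ≤ ρ*(cos σ)^(2-d) := mul_le_mul ρlow Cglow (by positivity) ρ0.le
    linarith
  have hQσ : Qf d (c^(2-d)) σ = ρ := by
    unfold Qf; rw [hcg, rpow_neg C0.le]; field_simp
  have hND : Nf d κ σ = (sin (d*σ)/sin ((2-d)*σ))^2 * Df d (c^(2-d)) σ := by
    have e1 : Nf d κ σ = 1 + η^2 - 2*η*cos (d*σ) := by unfold Nf; rw [hκC]
    have e2 : Df d (c^(2-d)) σ = 1 + ρ^2 - 2*ρ*cos ((2-d)*σ) := by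
      have : Df d (c^(2-d)) σ = 1 + (Qf d (c^(2-d)) σ)^2 - 2*(Qf d (c^(2-d)) σ)*cos ((2-d)*σ) := rfl
      rw [this, hQσ]
    rw [e1, e2, hη, hρ]
    have := id_ND d σ
    field_simp
    linear_combination this
  have hF : d*κ/((2-d)*(c^(2-d)))*Kf d κ σ = (sin (d*σ)/sin ((2-d)*σ))^2 * Den d (c^(2-d)) σ := by
    unfold Den Kf
    rw [hQσ, hκC, hκ, hcg]
    have e : (cos σ)^(2-d) * (cos σ)^d = cos σ^2 := by
      rw [← rpow_add C0, ← rpow_natCast]; congr 1; push_cast; ring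
    have e2 : d*(η/(cos σ)^d)/((2-d)*(ρ*(cos σ)^(2-d))) = sin (d*σ)/(sin ((2-d)*σ)*cos σ^2) := by
      rw [← e, hη, hρ]; field_simp
    rw [e2, hη, hρ]
    have := id_F d σ
    clear_value ρ η
    clear hη hρ e2 hND hκc
    generalize sin ((2-d)*σ) = G at this sg ⊢
    generalize sin (d*σ) = H at this sd ⊢
    generalize sin ((1+d)*σ) = H1 at this ⊢
    generalize sin ((1-d)*σ) = H2 at this ⊢
    field_simp
    linear_combination this
  refine ⟨κ, c, κ0, κ1, l1.trans clow, by linarith, by linarith, hκc, ?_, ?_, ?_⟩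
  · have := mul_le_of_le_one_left cdp.le κ1
    linarith
  · rw [le_div_iff₀ sg]
    have h1 := sin_mul_ge d σ hd0.le hd1 hσ0.le (by linarith [hσ.2])
    have h2 : d*t ≤ d*sin σ := by gcongr
    have h3 := sin_le_one ((2-d)*σ)
    have : 0 < d*t := by positivity
    have h4 : l*sin ((2-d)*σ) ≤ d*t*1 := mul_le_mul l4 h3 sg.le this.le
    linarith
  · intro s hs0 hs
    have h := gap d κ (c^(2-d)) _ σ t hd0 hd1 κ0 κ1 Q00 (by linarith) (by positivity) hσ (by rw [hQσ]; exact ρ1) hND hF ht0 hts s hs0 hs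
    refine h.trans ?_
    have h1 : l ≤ (c^(2-d))^2*t^2/48 := by
      refine l5.trans ?_
      gcongr
    have h2 := Df_nonneg d (c^(2-d)) s
    gcongr


lemma gauss_bound (c σ k : ℝ) (hc : 0 < c) (hk : 0 < k) :
    Integrable (fun τ : ℝ => c/(c^2+τ^2) * (exp (-k*(arctan (τ/c) - σ)^2) + exp (-k*(arctan (τ/c) + σ)^2))) ∧
    ∫ τ : ℝ, c/(c^2+τ^2) * (exp (-k*(arctan (τ/c) - σ)^2) + exp (-k*(arctan (τ/c) + σ)^2)) ≤ 2*√(π/k) := by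
  set G : ℝ → ℝ := fun s => exp (-k*(s - σ)^2) + exp (-k*(s + σ)^2) with hG
  have i1 : Integrable (fun s : ℝ => exp (-k*(s - σ)^2)) := (integrable_exp_neg_mul_sq hk).comp_sub_right σ
  have i2 : Integrable (fun s : ℝ => exp (-k*(s + σ)^2)) := (integrable_exp_neg_mul_sq hk).comp_add_right σ
  have iG : Integrable G := i1.add i2
  have vG : ∫ s, G s = 2*√(π/k) := by
    rw [hG, integral_add i1 i2, integral_sub_right_eq_self (fun s : ℝ => exp (-k*s^2)) σ,
      integral_add_right_eq_self (fun s : ℝ => exp (-k*s^2)) σ, integral_gaussian]; ring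
  have hder : ∀ x ∈ (univ : Set ℝ), HasDerivWithinAt (fun τ : ℝ => arctan (τ/c)) (c/(c^2+x^2)) univ x := by
    intro x _
    apply HasDerivAt.hasDerivWithinAt
    have := ((hasDerivAt_id x).div_const c).arctan
    refine this.congr_deriv ?_
    simp only [id]
    field_simp
  have hinj : InjOn (fun τ : ℝ => arctan (τ/c)) univ := by
    intro x _ y _ h
    have := arctan_injective h
    field_simp at this
    exact this
  have habs : ∀ x : ℝ, |c/(c^2+x^2)| = c/(c^2+x^2) := fun x => abs_of_nonneg (by positivity)
  have hI := integrableOn_image_iff_integrableOn_abs_deriv_smul MeasurableSet.univ hder hinj G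
  have hV := integral_image_eq_integral_abs_deriv_smul MeasurableSet.univ hder hinj G
  simp only [habs, smul_eq_mul, integrableOn_univ, setIntegral_univ] at hI hV
  refine ⟨hI.1 iG.integrableOn, ?_⟩
  rw [← vG]
  change ∫ τ : ℝ, c/(c^2+τ^2) * G (arctan (τ/c)) ≤ _
  rw [← hV]
  apply setIntegral_le_integral iG
  filter_upwards with s
  positivity

lemma norm_sq_one_sub (w p : ℝ) (V : ℂ) :
    ‖1 - (w:ℂ)*V^(p:ℂ)‖^2 = 1 + (w*‖V‖^p)^2 - 2*(w*‖V‖^p)*cos (p*V.arg) := by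
  have h1 : ((w:ℂ)*V^(p:ℂ)).re = w*‖V‖^p*cos (p*V.arg) := by
    rw [Complex.re_ofReal_mul, Complex.cpow_ofReal_re, mul_comm V.arg p]; ring
  have h2 : ‖(w:ℂ)*V^(p:ℂ)‖^2 = (w*‖V‖^p)^2 := by
    rw [norm_mul, Complex.norm_cpow_real, mul_pow, mul_pow, Complex.norm_real, norm_eq_abs, sq_abs]
  have h3 : ∀ z : ℂ, ‖1 - z‖^2 = 1 + ‖z‖^2 - 2*z.re := by
    intro z
    rw [Complex.sq_norm, Complex.sq_norm, Complex.normSq_apply, Complex.normSq_apply]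
    simp; ring
  rw [h3, h1, h2]; ring

lemma V_polar (c τ : ℝ) (hc : 0 < c) : 
    let V : ℂ := (c:ℂ) + τ*Complex.I
    V.arg = arctan (τ/c) ∧ ‖V‖ = c/cos (arctan (τ/c)) := by
  intro V
  have hre : V.re = c := by simp [V]
  have him : V.im = τ := by simp [V]
  have e : V.arg = arctan (τ/c) := by
    rw [Complex.arg_of_re_nonneg (by rw [hre]; exact hc.le), him, arctan_eq_arcsin]
    congr 1
    have : ‖V‖ = c*√(1+(τ/c)^2) := by
      rw [Complex.norm_eq_sqrt_sq_add_sq, hre, him]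
      have : c^2+τ^2 = c^2*(1+(τ/c)^2) := by field_simp
      rw [this, sqrt_mul (sq_nonneg c), sqrt_sq hc.le]
    rw [this]
    field_simp
  refine ⟨e, ?_⟩
  rw [← e, eq_div_iff, Complex.norm_mul_cos_arg, hre]
  rw [e]
  exact (cos_arctan_pos _).ne'


lemma A_sq (d κ c τ : ℝ) (hc : 0 < c) :
    ‖1-((κ*c^d:ℝ):ℂ)*((c:ℂ)+τ*Complex.I)^((-d:ℝ):ℂ)‖^2 = Nf d κ |arctan (τ/c)| := by
  obtain ⟨e1, e2⟩ := V_polar c τ hc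
  have hcos := cos_arctan_pos (τ/c)
  rw [norm_sq_one_sub, e1, e2]
  unfold Nf
  have h1 : κ*c^d*(c/cos (arctan (τ/c)))^(-d) = κ*(cos (arctan (τ/c)))^d := by
    rw [div_rpow hc.le hcos.le, rpow_neg hc.le, rpow_neg hcos.le]
    have := rpow_pos_of_pos hc d
    have := rpow_pos_of_pos hcos d
    field_simp
  have h2 : cos (-d*arctan (τ/c)) = cos (d*|arctan (τ/c)|) := by
    rcases abs_choice (arctan (τ/c)) with h | h <;> rw [h]
    · rw [neg_mul, cos_neg]
    · congr 1; ring
  rw [h1, h2, cos_abs]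

lemma B_sq (d c τ : ℝ) (hc : 0 < c) :
    ‖1-((c:ℂ)+τ*Complex.I)^((2-d:ℝ):ℂ)‖^2 = Df d (c^(2-d)) |arctan (τ/c)| := by
  obtain ⟨e1, e2⟩ := V_polar c τ hc
  have hcos := cos_arctan_pos (τ/c)
  have h0 := norm_sq_one_sub 1 (2-d) ((c:ℂ)+τ*Complex.I)
  rw [Complex.ofReal_one, one_mul] at h0
  rw [h0, e1, e2]
  unfold Df
  have h1 : 1*(c/cos (arctan (τ/c)))^(2-d) = c^(2-d)*(cos (arctan (τ/c)))^(-(2-d)) := by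
    rw [div_rpow hc.le hcos.le, rpow_neg hcos.le]
    field_simp
  have h2 : cos ((2-d)*arctan (τ/c)) = cos ((2-d)*|arctan (τ/c)|) := by
    rcases abs_choice (arctan (τ/c)) with h | h <;> rw [h]
    rw [mul_neg, cos_neg]
  rw [h1, h2, cos_abs]

lemma exp_two (k σ s : ℝ) : exp (-k*(|s| - σ)^2) ≤ exp (-k*(s - σ)^2) + exp (-k*(s + σ)^2) := by
  rcases abs_choice s with h | h <;> rw [h]
  · linarith [exp_pos (-k*(s + σ)^2)]
  · rw [show (-s-σ)^2 = (s+σ)^2 by ring]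
    linarith [exp_pos (-k*(s - σ)^2)]

lemma point (d κ0 b κ c l σ r τ : ℝ) (n : ℕ) (hn : 1 ≤ n) (hd0 : 0 < d) (hd1 : d ≤ 1) (hκ0 : 0 < κ0) (hb : -1 < b)
    (hl : 0 < l) (hκ : 0 < κ) (hκ1 : κ ≤ 1) (hlc : l ≤ c) (hc1 : c < 1) (hcg : c^(2-d) ≤ 1 - l) (hr : 0 < r)
    (hσ : σ ∈ Ioo 0 (π/2))
    (H : ∀ s, 0 ≤ s → s < π/2 → Nf d κ s ≤ r^2 * Df d (c^(2-d)) s * (1 - l*(s-σ)^2)) :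
    ‖Jf (2-d) κ0 n ((c:ℂ)+τ*Complex.I)‖ * ‖1-((κ*c^d:ℝ):ℂ)*((c:ℂ)+τ*Complex.I)^((-d:ℝ):ℂ)‖^(n+b:ℝ)
    ≤ ((2-d)*2^(1+b)*(4/l^2)*l^(-(2-d)-(2-d)*κ0)*exp (2*l)) * r^(n-1) *
      (c/(c^2+τ^2) * (exp (-(l*n/2)*(arctan (τ/c) - σ)^2) + exp (-(l*n/2)*(arctan (τ/c) + σ)^2))) := by
  have hc : 0 < c := lt_of_lt_of_le hl hlc
  have hA := A_sq d κ c τ hc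
  have hB := B_sq d c τ hc
  set V : ℂ := (c:ℂ)+τ*Complex.I with hV
  set A := ‖1-((κ*c^d:ℝ):ℂ)*V^((-d:ℝ):ℂ)‖ with hAd
  set s := arctan (τ/c) with hs
  have hVre : V.re = c := Vre c τ
  obtain ⟨hBl, _⟩ := one_sub_cpow_norm_ge (2-d) (by linarith) (by linarith) V (by rw [hVre]; exact hc) (by rw [hVre]; exact hc1)
  have hJ : ‖Jf (2-d) κ0 n V‖ = (2-d)*‖V‖^((2-d)-1-(2-d)*κ0)*(‖1-V^((2-d:ℝ):ℂ)‖^(n+1))⁻¹ := by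
    unfold Jf
    rw [norm_mul, norm_mul, norm_inv, norm_pow, Complex.norm_cpow_real, Complex.norm_real, norm_eq_abs, abs_of_nonneg (by linarith)]
  set B := ‖1-V^((2-d:ℝ):ℂ)‖ with hBd
  have hVc : c ≤ ‖V‖ := Vnorm_ge c τ hc
  have hV0 : 0 < ‖V‖ := by linarith
  have hVsq : ‖V‖^2 = c^2+τ^2 := Vnormsq c τ
  have hBl' : l/2*‖V‖^(2-d) ≤ B := by
    refine le_trans ?_ hBl
    rw [hVre]
    have : l/2 ≤ (1-c^(2-d))/2 := by linarith
    gcongr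
  have hB0 : 0 < B := lt_of_lt_of_le (by positivity) hBl'
  have hA0 : 0 ≤ A := norm_nonneg _
  have hs2 : |s| < π/2 := abs_lt.2 ⟨neg_pi_div_two_lt_arctan _, arctan_lt_pi_div_two _⟩
  set y := (|s|-σ)^2 with hy
  have hy4 : y ≤ 4 := by
    have h1 : |(|s|-σ)| ≤ 2 := by
      rw [abs_le]
      constructor <;> linarith [abs_nonneg s, hσ.1, hσ.2, pi_le_four]
    have := sq_le_sq' (abs_le.1 h1).1 (abs_le.1 h1).2
    linarith
  have hAB : A ≤ r*B*exp (-(l/2)*y) := by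
    have h1 := H |s| (abs_nonneg _) hs2
    rw [← hA, ← hB] at h1
    have h2 : 1 - l*y ≤ exp (-l*y) := by
      have := add_one_le_exp (-l*y); linarith
    have h3 : A^2 ≤ (r*B*exp (-(l/2)*y))^2 := by
      refine h1.trans ?_
      have h4 : (r*B*exp (-(l/2)*y))^2 = r^2*B^2*exp (-l*y) := by
        rw [mul_pow, mul_pow, ← exp_nat_mul]; congr 2; push_cast; ring
      rw [h4]
      gcongr
    exact (pow_le_pow_iff_left₀ hA0 (by positivity) two_ne_zero).1 h3
  have hA2 : A ≤ 2 := by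
    have h1 : A^2 ≤ 2^2 := by
      rw [hA]; unfold Nf
      have c1 : 0 < cos |s| := cos_pos_of_mem_Ioo ⟨by linarith [abs_nonneg s, pi_pos], hs2⟩
      have e1 : (cos |s|)^d ≤ 1 := rpow_le_one c1.le (cos_le_one _) hd0.le
      have e0 := rpow_pos_of_pos c1 d
      have e2 : κ*(cos |s|)^d ≤ 1 := mul_le_one₀ hκ1 e0.le e1
      have e3 : 0 < κ*(cos |s|)^d := by positivity
      have e4 := neg_one_le_cos (d*|s|)
      nlinarith
    exact (pow_le_pow_iff_left₀ hA0 (by positivity) two_ne_zero).1 h1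
  have hsplit : A^(n+b:ℝ) = A^(n-1) * A^(1+b) := by
    rw [← rpow_natCast A (n-1), ← rpow_add_of_nonneg hA0 (by positivity) (by linarith)]
    congr 1
    push_cast [hn]; ring
  have hA1b : A^(1+b) ≤ 2^(1+b) := rpow_le_rpow hA0 hA2 (by linarith)
  have hAn : A^(n-1) ≤ r^(n-1)*B^(n-1)*(exp (2*l)*exp (-(l*n/2)*y)) := by
    have h1 := pow_le_pow_left₀ hA0 hAB (n-1)
    refine h1.trans ?_
    rw [mul_pow, mul_pow, ← exp_nat_mul, ← exp_add]
    gcongr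
    push_cast [hn]
    have : l*y ≤ l*4 := by gcongr
    nlinarith
  have hBinv : (B^2)⁻¹ ≤ 4/l^2*(‖V‖^(2-d))⁻¹^2 := by
    have h1 : (l/2*‖V‖^(2-d))^2 ≤ B^2 := by gcongr
    have h2 := inv_anti₀ (by positivity) h1
    refine h2.trans (le_of_eq ?_)
    field_simp
    try norm_num
  have hpow : ‖V‖^((2-d)-1-(2-d)*κ0)*(‖V‖^(2-d))⁻¹^2 ≤ l^(-(2-d)-(2-d)*κ0)*(c/(c^2+τ^2)) := by
    have e1 : ‖V‖^((2-d)-1-(2-d)*κ0)*(‖V‖^(2-d))⁻¹^2 = ‖V‖^(1-(2-d)-(2-d)*κ0) * (‖V‖^2)⁻¹ := by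
      rw [← rpow_neg hV0.le, ← rpow_natCast, ← rpow_mul hV0.le, ← rpow_natCast ‖V‖ 2, ← rpow_neg hV0.le, ← rpow_add hV0, ← rpow_add hV0]
      congr 1; push_cast; ring
    have hgk : 0 < (2-d)*κ0 := mul_pos (by linarith) hκ0
    have e2 : ‖V‖^(1-(2-d)-(2-d)*κ0) ≤ c^(1-(2-d)-(2-d)*κ0) := rpow_le_rpow_of_nonpos hc hVc (by linarith)
    have e3 : c^(1-(2-d)-(2-d)*κ0) = c^(-(2-d)-(2-d)*κ0)*c := by
      rw [← rpow_add_one hc.ne']; congr 1; ring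
    have e4 : c^(-(2-d)-(2-d)*κ0) ≤ l^(-(2-d)-(2-d)*κ0) := rpow_le_rpow_of_nonpos hl hlc (by linarith)
    rw [e1, hVsq]
    calc _ ≤ (l^(-(2-d)-(2-d)*κ0)*c) * (c^2+τ^2)⁻¹ := by
          gcongr
          rw [e3] at e2
          refine e2.trans ?_
          gcongr
      _ = _ := by ring
  rw [hJ, hsplit]
  have hBB : (B^(n+1))⁻¹ * B^(n-1) = (B^2)⁻¹ := by
    have : B^(n+1) = B^(n-1)*B^2 := by rw [← pow_add]; congr 1; omega
    rw [this]; field_simp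
  have g0 : 0 < 2 - d := by linarith
  have hexp := exp_two (l*n/2) σ s
  rw [← hy] at hexp
  calc (2-d)*‖V‖^((2-d)-1-(2-d)*κ0)*(B^(n+1))⁻¹ * (A^(n-1)*A^(1+b))
      ≤ (2-d)*‖V‖^((2-d)-1-(2-d)*κ0)*(B^(n+1))⁻¹ * ((r^(n-1)*B^(n-1)*(exp (2*l)*exp (-(l*n/2)*y)))*2^(1+b)) := by
        gcongr
    _ = (2-d)*2^(1+b)*exp (2*l)*r^(n-1)*exp (-(l*n/2)*y)*(‖V‖^((2-d)-1-(2-d)*κ0)*((B^(n+1))⁻¹*B^(n-1))) := by ring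
    _ ≤ (2-d)*2^(1+b)*exp (2*l)*r^(n-1)*exp (-(l*n/2)*y)*(‖V‖^((2-d)-1-(2-d)*κ0)*(4/l^2*(‖V‖^(2-d))⁻¹^2)) := by
        rw [hBB]; gcongr
    _ = (2-d)*2^(1+b)*exp (2*l)*r^(n-1)*exp (-(l*n/2)*y)*(4/l^2*(‖V‖^((2-d)-1-(2-d)*κ0)*(‖V‖^(2-d))⁻¹^2)) := by ring
    _ ≤ (2-d)*2^(1+b)*exp (2*l)*r^(n-1)*(exp (-(l*n/2)*(s - σ)^2) + exp (-(l*n/2)*(s + σ)^2))*(4/l^2*(l^(-(2-d)-(2-d)*κ0)*(c/(c^2+τ^2)))) := by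
        gcongr
    _ = _ := by ring

lemma Th_eq (α θ σ d : ℝ) (hα : 0 < α) (hd : d = 2/(1+α)) (hσ : σ = (π-θ)/2) :
    Th α θ = d*sin σ*cos σ/sin (d*σ) ∧ Th (1/α) θ = (2-d)*sin σ*cos σ/sin ((2-d)*σ) ∧
     (π-θ)/(1+α) = d*σ ∧ (π-θ)/(1+1/α) = (2-d)*σ ∧ d/(2-d) = 1/α ∧ d = (2-d)/α := by
  have e0 : sin θ = 2*sin σ*cos σ := by
    rw [← sin_two_mul, hσ, ← sin_pi_sub]; congr 1; ring
  have hp : 0 < 1 + α := by linarith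
  have e1 : (π-θ)/(1+α) = d*σ := by rw [hd, hσ]; field_simp
  have hg : 2 - d = 2*α/(1+α) := by rw [hd]; field_simp; ring
  have e2 : (π-θ)/(1+1/α) = (2-d)*σ := by
    rw [hg, hσ]; field_simp; ring
  refine ⟨?_, ?_, e1, e2, ?_, ?_⟩
  · unfold Th; rw [e1, e0, hd]
    generalize sin (2/(1+α)*σ) = X
    rw [← div_div]; congr 1; field_simp
  · unfold Th; rw [e2, e0]
    generalize sin ((2-d)*σ) = X
    rw [← div_div, hg]; congr 1; field_simp; ring
  · rw [hg, hd]; field_simp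
  · rw [hg, hd]; field_simp

theorem stmt1 (α a b ε : ℝ) (hα : 1 ≤ α) (ha : -1 < a) (hb : -1 < b)
    (hε : ε ∈ Set.Ioo 0 (Real.pi / 2))
    (P : ℕ → Polynomial ℝ)
    (hdeg : ∀ n, (P n).natDegree = n)
    (horth : ∀ n, ∀ j < n,
      ∫ x in Set.Ioo (-1:ℝ) 1,
        (P n).eval x * (1 - x) ^ (α * (j:ℝ)) * (1 - x) ^ a * (1 + x) ^ b = 0)
    (hnonzero : ∀ n,
      (∫ x in Set.Ioo (-1:ℝ) 1,
        (P n).eval x * (1 - x) ^ (α * (n:ℝ)) * (1 - x) ^ a * (1 + x) ^ b) ≠ 0)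
    (hnorm : ∀ n : ℕ, (P n).eval 1 =
      Real.Gamma (n + (a+1)/α) / (Real.Gamma (n+1) * Real.Gamma ((a+1)/α))) :
    ∃ C > 0, ∀ n : ℕ, 1 ≤ n → ∀ θ ∈ Set.Icc ε (Real.pi - ε),
      |(P n).eval (xval α θ)| ≤
        C * (n:ℝ) ^ (-(1:ℝ)/2) *
          (Real.sin ((Real.pi - θ) / (1 + α)) / Real.sin ((Real.pi - θ) / (1 + 1/α)))^n := by
  have hα0 : 0 < α := by linarith
  obtain ⟨d, hd⟩ : ∃ d : ℝ, d = 2/(1+α) := ⟨_, rfl⟩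
  have hd0 : 0 < d := by rw [hd]; positivity
  have hd1 : d ≤ 1 := by rw [hd, div_le_one (by linarith)]; linarith
  have g0 : 0 < 2 - d := by linarith
  obtain ⟨hε0, hε1⟩ := hε
  obtain ⟨l, hl, hset⟩ := setup d (ε/2) hd0 hd1 (by linarith) (by linarith)
  have hκ0 : 0 < (a+1)/α := div_pos (by linarith) hα0
  set K := (2-d)*2^(1+b)*(4/l^2)*l^(-(2-d)-(2-d)*((a+1)/α))*exp (2*l) with hK
  have K0 : 0 < K := by positivity
  refine ⟨K*√(2*π/l)/(π*l*l^|b|), by positivity, ?_⟩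
  intro n hn θ hθ
  have hn0 : (0:ℝ) < n := by exact_mod_cast hn
  obtain ⟨σ, hσd⟩ : ∃ σ : ℝ, σ = (π-θ)/2 := ⟨_, rfl⟩
  have hσI : σ ∈ Icc (ε/2) (π/2-ε/2) := ⟨by rw [hσd]; linarith [hθ.2], by rw [hσd]; linarith [hθ.1]⟩
  have hσ : σ ∈ Ioo 0 (π/2) := ⟨by linarith [hσI.1], by linarith [hσI.2]⟩
  obtain ⟨T1, T2, T3, T4, T5, T6⟩ := Th_eq α θ σ d hα0 hd hσd
  obtain ⟨κ, c, k0, k1, lc, c1, cg, hu, hul, hrl, H⟩ := hset σ hσI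
  have c0 : 0 < c := by linarith
  rw [T3, T4]
  set r := sin (d*σ)/sin ((2-d)*σ) with hr
  have r0 : 0 < r := by linarith
  have hx : xval α θ = 1 - 2*(κ*c^d) := by
    unfold xval; rw [T1, T2, hu, T5]; ring
  rw [hx]
  set u := κ*c^d with hud
  have cdp := rpow_pos_of_pos c0 d
  have u0 : 0 < u := by positivity
  have hl1 : l < 1 := by linarith
  have hser := fun v hv => seriesP α a b hα0 ha hb n (P n) (hdeg n) (horth n) (hnorm n) v hv
  have hrep := rep_bound α (2-d) d ((a+1)/α) a b c u n hn (P n) hα0 (by linarith) (by linarith) T6 rfl ha hb c0 c1 u0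
    (mul_le_of_le_one_left cdp.le k1) hser
  obtain ⟨gi, gv⟩ := gauss_bound c σ (l*n/2) c0 (by positivity)
  have hintg := integral_mono_of_nonneg (μ := volume) (Filter.Eventually.of_forall (fun τ : ℝ => by positivity)) (gi.const_mul (K*r^(n-1)))
    (Filter.Eventually.of_forall (fun τ : ℝ => point d ((a+1)/α) b κ c l σ r τ n hn hd0 hd1 hκ0 hb hl k0 k1 lc c1 cg r0 hσ H))
  rw [integral_const_mul] at hintg
  have hfin : 2*π*(|(P n).eval (1-2*u)| * (1-u)^b) ≤ K*r^(n-1)*(2*√(π/(l*n/2))) := by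
    refine hrep.trans (hintg.trans ?_)
    gcongr
  have hsq : √(π/(l*n/2)) = √(2*π/l) * (n:ℝ)^(-(1:ℝ)/2) := by
    rw [show π/(l*n/2) = (2*π/l)*(n:ℝ)⁻¹ by field_simp, sqrt_mul (by positivity), sqrt_eq_rpow (n:ℝ)⁻¹,
      inv_rpow hn0.le, ← rpow_neg hn0.le]
    congr 2; ring
  have hub : l^|b| ≤ (1-u)^b := by
    rcases le_total 0 b with h | h
    · rw [abs_of_nonneg h]
      exact rpow_le_rpow hl.le (by linarith) h
    · have h1 : 1 ≤ (1-u)^b := one_le_rpow_of_pos_of_le_one_of_nonpos (by linarith) (by linarith) h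
      exact (rpow_le_one hl.le hl1.le (abs_nonneg b)).trans h1
  have hrn : l*r^(n-1) ≤ r^n := by
    have : r^n = r*r^(n-1) := by rw [← pow_succ']; congr 1; omega
    rw [this]; gcongr
  rw [hsq] at hfin
  have lb : 0 < l^|b| := by positivity
  have h1 : 2*π*(|(P n).eval (1-2*u)| * l^|b|) ≤ 2*π*(|(P n).eval (1-2*u)| * (1-u)^b) := by gcongr
  have h2 : l*(2*π*(|(P n).eval (1-2*u)| * l^|b|)) ≤ l*(K*r^(n-1)*(2*(√(2*π/l) * (n:ℝ)^(-(1:ℝ)/2)))) := by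
    apply mul_le_mul_of_nonneg_left (h1.trans hfin) hl.le
  have h3 : K*(2*(√(2*π/l) * (n:ℝ)^(-(1:ℝ)/2)))*(l*r^(n-1)) ≤ K*(2*(√(2*π/l) * (n:ℝ)^(-(1:ℝ)/2)))*r^n := by gcongr
  have e : K*√(2*π/l)/(π*l*l^|b|) * (n:ℝ)^(-(1:ℝ)/2) * r^n = (K*√(2*π/l)*(n:ℝ)^(-(1:ℝ)/2) * r^n)/(π*l*l^|b|) := by
    ring
  rw [e, le_div_iff₀ (by positivity)]
  linarith
end

section
/- For any fixed real α > 0, the function x(θ) := 1 − 2·Θ_{1/α}(θ)·Θ_α(θ)^{1/α} is strictly decreasing on the interval (0, π), and moreover x(θ) → 1 as θ → 0⁺ and x(θ) → −1 as θ → π⁻. -/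
open Real Filter Set Topology

lemma den_pos {c t : ℝ} (hc : 0 < c) (ht : t ∈ Set.Ico 0 Real.pi) :
    0 < Real.sin ((Real.pi - t) / (1 + c)) := by
  have h1 : 0 < Real.pi - t := by linarith [ht.2]
  apply Real.sin_pos_of_pos_of_lt_pi (by positivity)
  rw [div_lt_iff₀ (by linarith)]
  nlinarith [ht.1, Real.pi_pos, mul_pos Real.pi_pos hc]

lemma Th_pos {c t : ℝ} (hc : 0 < c) (ht : t ∈ Set.Ioo 0 Real.pi) : 0 < Th c t := by
  have h := den_pos hc ⟨ht.1.le, ht.2⟩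
  have h2 := Real.sin_pos_of_pos_of_lt_pi ht.1 ht.2
  unfold Th
  positivity

lemma key {b u : ℝ} (hb : 1 < b) (hu : u ∈ Set.Ioo 0 Real.pi) :
    b * Real.cos u * Real.sin (u / b) - Real.sin u * Real.cos (u / b) < 0 := by
  have hb0 : 0 < b := by linarith
  have hd : ∀ x : ℝ, HasDerivAt
      (fun u => b * Real.cos u * Real.sin (u / b) - Real.sin u * Real.cos (u / b))
      (-(b - 1 / b) * (Real.sin x * Real.sin (x / b))) x := by
    intro x
    have hl : HasDerivAt (fun u : ℝ => u / b) (1 / b) x := (hasDerivAt_id x).div_const b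
    have h := (((Real.hasDerivAt_cos x).const_mul b).mul hl.sin).sub
      ((Real.hasDerivAt_sin x).mul hl.cos)
    refine h.congr_deriv ?_
    field_simp
    ring
  have hanti : StrictAntiOn
      (fun u => b * Real.cos u * Real.sin (u / b) - Real.sin u * Real.cos (u / b))
      (Set.Icc 0 Real.pi) := by
    apply strictAntiOn_of_deriv_neg (convex_Icc _ _)
    · exact fun x _ => (hd x).continuousAt.continuousWithinAt
    · intro x hx
      rw [interior_Icc] at hx
      rw [(hd x).deriv]
      have h1 := Real.sin_pos_of_pos_of_lt_pi hx.1 hx.2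
      have h2 : 0 < Real.sin (x / b) := by
        apply Real.sin_pos_of_pos_of_lt_pi (div_pos hx.1 hb0)
        exact (div_lt_self hx.1 hb).trans hx.2
      have h3 : 0 < b - 1 / b := by
        have : 1 / b < 1 := by rw [div_lt_one hb0]; exact hb
        linarith
      have := mul_pos h3 (mul_pos h1 h2)
      linarith
  have := hanti (Set.left_mem_Icc.2 Real.pi_pos.le) ⟨hu.1.le, hu.2.le⟩ hu.1
  simpa using this

lemma Th_mono {c : ℝ} (hc : 0 < c) : StrictMonoOn (Th c) (Set.Ioo 0 Real.pi) := by
  have hb : 0 < 1 + c := by linarith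
  have hd : ∀ t ∈ Set.Ioo 0 Real.pi, ∃ d, 0 < d ∧ HasDerivAt (Th c) d t := by
    intro t ht
    have hs := den_pos hc ⟨ht.1.le, ht.2⟩
    have hl : HasDerivAt (fun u : ℝ => (Real.pi - u) / (1 + c)) (-1 / (1 + c)) t :=
      ((hasDerivAt_id t).const_sub Real.pi).div_const _
    have h := (Real.hasDerivAt_sin t).div (hl.sin.const_mul (1 + c)) (by positivity)
    refine ⟨_, ?_, h⟩
    apply div_pos _ (by positivity)
    have k := key (b := 1 + c) (u := Real.pi - t) (by linarith)
      ⟨by linarith [ht.2], by linarith [ht.1]⟩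
    rw [Real.cos_pi_sub, Real.sin_pi_sub] at k
    have e : (1 + c) * (Real.cos ((Real.pi - t) / (1 + c)) * (-1 / (1 + c)))
        = - Real.cos ((Real.pi - t) / (1 + c)) := by field_simp
    rw [e]
    linarith
  apply strictMonoOn_of_deriv_pos (convex_Ioo _ _)
  · intro t ht
    obtain ⟨d, _, h⟩ := hd t ht
    exact h.continuousAt.continuousWithinAt
  · intro t ht
    rw [interior_Ioo] at ht
    obtain ⟨d, h0, h⟩ := hd t ht
    rwa [h.deriv]

lemma Th_zero {c : ℝ} (hc : 0 < c) : Tendsto (Th c) (𝓝[>] (0:ℝ)) (𝓝 0) := by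
  have hs := den_pos hc (t := 0) ⟨le_rfl, Real.pi_pos⟩
  have hb : 0 < 1 + c := by linarith
  have h : ContinuousAt (Th c) 0 := by
    unfold Th
    apply ContinuousAt.div (by fun_prop) (by fun_prop) (by positivity)
  have h2 : Tendsto (Th c) (𝓝 0) (𝓝 (Th c 0)) := h
  have h0 : Th c 0 = 0 := by simp [Th]
  rw [h0] at h2
  exact h2.mono_left nhdsWithin_le_nhds

lemma Th_pi {c : ℝ} (hc : 0 < c) : Tendsto (Th c) (𝓝[<] Real.pi) (𝓝 1) := by
  have hb : 0 < 1 + c := by linarith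
  have h : ContinuousAt
      (fun t => Real.sinc (Real.pi - t) / Real.sinc ((Real.pi - t) / (1 + c))) Real.pi := by
    have hs := Real.continuous_sinc
    apply ContinuousAt.div (by fun_prop) (by fun_prop) (by simp)
  have h2 := h.tendsto.mono_left (nhdsWithin_le_nhds (s := Set.Iio Real.pi))
  simp only [sub_self, zero_div, Real.sinc_zero, div_one] at h2
  refine h2.congr' ?_
  filter_upwards [self_mem_nhdsWithin] with t ht
  have h1 : Real.pi - t ≠ 0 := by
    have : t < Real.pi := ht
    linarith
  rw [Real.sinc_of_ne_zero h1, Real.sinc_of_ne_zero (by positivity), Real.sin_pi_sub, Th]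
  field_simp

theorem stmt2 (α : ℝ) (hα : 0 < α) :
    StrictAntiOn (xval α) (Set.Ioo 0 Real.pi) ∧
    Tendsto (xval α) (𝓝[>] (0:ℝ)) (𝓝 1) ∧
    Tendsto (xval α) (𝓝[<] Real.pi) (𝓝 (-1)) := by
  have hi : 0 < 1 / α := by positivity
  refine ⟨?_, ?_, ?_⟩
  · intro x hx y hy hxy
    have h1 := Th_mono hi hx hy hxy
    have h2 := Real.rpow_lt_rpow (Th_pos hα hx).le (Th_mono hα hx hy hxy) hi
    have h3 := mul_lt_mul'' h1 h2 (Th_pos hi hx).le (Real.rpow_nonneg (Th_pos hα hx).le _)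
    unfold xval
    linarith
  · have h := ((Th_zero hi).const_mul 2).mul ((Th_zero hα).rpow_const (p := 1 / α) (Or.inr hi.le))
    have h' := h.const_sub 1
    simpa [funext_iff, show xval α = fun θ => 1 - 2 * Th (1/α) θ * (Th α θ) ^ ((1:ℝ)/α) from rfl] using h'
  · have h := ((Th_pi hi).const_mul 2).mul ((Th_pi hα).rpow_const (p := 1 / α) (Or.inr hi.le))
    have h' := h.const_sub 1
    rw [Real.one_rpow] at h'
    norm_num at h'
    simpa [funext_iff, show xval α = fun θ => 1 - 2 * Th (1/α) θ * (Th α θ) ^ ((1:ℝ)/α) from rfl] using h'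
end

section
/- For any fixed real α > 0, the function Θ_α(t) := sin t / ((1+α)·sin((π−t)/(1+α))) is strictly increasing on the interval (0, π), and moreover Θ_α(t) → 0 as t → 0⁺ and Θ_α(t) → 1 as t → π⁻; in particular 0 < Θ_α(t) < 1 for all t ∈ (0, π). -/
open Real Filter Set Topology

theorem arg_mem (α : ℝ) (hα : 0 < α) (t : ℝ) (h0 : 0 ≤ t) (h1 : t < π) :
    0 < sin ((π - t) / (1 + α)) := by
  apply sin_pos_of_pos_of_lt_pi
  · exact div_pos (by linarith) (by linarith)
  · rw [div_lt_iff₀ (by linarith)]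
    nlinarith [pi_pos]

theorem hasDeriv_arg (α : ℝ) (t : ℝ) :
    HasDerivAt (fun t => (π - t) / (1 + α)) (-1 / (1 + α)) t :=
  ((hasDerivAt_id t).const_sub π).div_const (1 + α)

theorem numer_pos (α : ℝ) (hα : 0 < α) (t : ℝ) (h0 : 0 < t) (h1 : t < π) :
    0 < cos t * sin ((π - t) / (1 + α)) + sin t * cos ((π - t) / (1 + α)) / (1 + α) := by
  have hd : ∀ x, HasDerivAt (fun t => cos t * sin ((π - t) / (1 + α)) +
      sin t * cos ((π - t) / (1 + α)) / (1 + α))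
      (-(sin x * sin ((π - x) / (1 + α)) * (1 - 1 / (1 + α) ^ 2))) x := by
    intro x
    have h := ((hasDerivAt_cos x).mul (hasDeriv_arg α x).sin).add
      (((hasDerivAt_sin x).mul (hasDeriv_arg α x).cos).div_const (1 + α))
    refine h.congr_deriv ?_
    have : 1 + α ≠ 0 := by linarith
    field_simp
    ring
  have hanti := strictAntiOn_of_deriv_neg (convex_Icc 0 π)
    (fun x _ => (hd x).continuousAt.continuousWithinAt) (by
      intro x hx
      rw [interior_Icc] at hx
      rw [(hd x).deriv, neg_lt_zero]
      refine mul_pos (mul_pos (sin_pos_of_mem_Ioo hx) (arg_mem α hα x hx.1.le hx.2)) ?_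
      rw [sub_pos, div_lt_one (by positivity)]
      nlinarith)
  have := hanti ⟨h0.le, h1.le⟩ ⟨pi_pos.le, le_rfl⟩ h1
  simpa using this

theorem stmt3 (α : ℝ) (hα : 0 < α) :
    StrictMonoOn (Th α) (Set.Ioo 0 Real.pi) ∧
    Tendsto (Th α) (𝓝[>] (0:ℝ)) (𝓝 0) ∧
    Tendsto (Th α) (𝓝[<] Real.pi) (𝓝 1) ∧
    ∀ t ∈ Set.Ioo 0 Real.pi, Th α t ∈ Set.Ioo (0:ℝ) 1 := by
  have hα1 : 0 < 1 + α := by linarith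
  have hd : ∀ x, 0 ≤ x → x < π → HasDerivAt (Th α)
      ((cos x * ((1 + α) * sin ((π - x) / (1 + α))) -
        sin x * ((1 + α) * (cos ((π - x) / (1 + α)) * (-1 / (1 + α))))) /
        ((1 + α) * sin ((π - x) / (1 + α))) ^ 2) x := by
    intro x h0 h1
    exact (hasDerivAt_sin x).div ((hasDeriv_arg α x).sin.const_mul (1 + α))
      (mul_pos hα1 (arg_mem α hα x h0 h1)).ne'
  refine ⟨?_, ?_, ?_, ?_⟩
  · refine strictMonoOn_of_deriv_pos (convex_Ioo 0 π)
      (fun x hx => (hd x hx.1.le hx.2).continuousAt.continuousWithinAt) ?_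
    intro x hx
    rw [interior_Ioo] at hx
    rw [(hd x hx.1.le hx.2).deriv]
    have h1 := arg_mem α hα x hx.1.le hx.2
    refine div_pos ?_ (by positivity)
    have h2 := mul_pos hα1 (numer_pos α hα x hx.1 hx.2)
    convert h2 using 1
    field_simp
    ring
  · have h := (hd 0 le_rfl pi_pos).continuousAt.tendsto
    have h0 : Th α 0 = 0 := by simp [Th]
    rw [h0] at h
    exact h.mono_left nhdsWithin_le_nhds
  · have hc : ContinuousAt (fun t => sinc (π - t) / sinc ((π - t) / (1 + α))) π := by
      apply ContinuousAt.div
      · exact (continuous_sinc.comp (by fun_prop : Continuous fun t : ℝ => π - t)).continuousAt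
      · exact (continuous_sinc.comp
          (by fun_prop : Continuous fun t : ℝ => (π - t) / (1 + α))).continuousAt
      · simp
    have h := hc.tendsto
    simp only [sub_self, zero_div, sinc_zero, div_one] at h
    refine (h.mono_left nhdsWithin_le_nhds).congr' ?_
    filter_upwards [Ioo_mem_nhdsLT pi_pos] with t ht
    have h1 : π - t ≠ 0 := by linarith [ht.2]
    have h2 := (arg_mem α hα t ht.1.le ht.2).ne'
    rw [sinc_of_ne_zero h1, sinc_of_ne_zero (div_ne_zero h1 hα1.ne'), Th, sin_pi_sub]
    field_simp
  · intro t ht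
    have h1 := arg_mem α hα t ht.1.le ht.2
    refine ⟨div_pos (sin_pos_of_mem_Ioo ht) (by positivity), ?_⟩
    rw [Th, div_lt_one (by positivity)]
    have ha : 0 < α / (1 + α) := by positivity
    have hb : 0 < 1 / (1 + α) := by positivity
    have hab : α / (1 + α) + 1 / (1 + α) = 1 := by
      rw [← add_div, add_comm, div_self hα1.ne']
    have h := strictConcaveOn_sin_Icc.2 (⟨le_rfl, pi_pos.le⟩ : (0 : ℝ) ∈ Icc 0 π)
      (⟨by linarith [ht.2], by linarith [ht.1]⟩ : π - t ∈ Icc 0 π) (by linarith [ht.2])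
      ha hb hab
    simp only [smul_eq_mul, sin_zero, mul_zero, zero_add, sin_pi_sub] at h
    rw [one_div_mul_eq_div, one_div_mul_eq_div, div_lt_iff₀ hα1] at h
    linarith
end

section
/- Let a > −1 be a real number and let n, r be natural numbers with 0 ≤ r ≤ n. Then ∑_{s=0}^{r} (−1)^s · Γ(n+s+a+1) / (Γ(n+1)·Γ(s+1)·Γ(r−s+1)·Γ(s+a+1)) = (−1)^r · Γ(n+a+1) / (Γ(n−r+1)·Γ(r+a+1)·Γ(r+1)), where Γ denotes the real Gamma function. -/
open Real Finset

lemma stmt5_aux (n : ℕ) (r : ℕ) : ∀ b : ℝ, -1 < b →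
    ∑ s ∈ Finset.range (r+1), (r.choose s : ℝ) * ((-1:ℝ)^s *
      (Real.Gamma ((n:ℝ) + s + b + 1) / Real.Gamma ((s:ℝ) + b + 1))) =
    (-1:ℝ)^r * (n.descFactorial r : ℝ) * Real.Gamma ((n:ℝ) + b + 1) / Real.Gamma ((r:ℝ) + b + 1) := by
  induction r with
  | zero => intro b hb; simp
  | succ r ih =>
    intro b hb
    have key := Finset.sum_choose_succ_mul (R := ℝ) (fun s _ => (-1:ℝ)^s *
      (Real.Gamma ((n:ℝ) + s + b + 1) / Real.Gamma ((s:ℝ) + b + 1))) r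
    rw [key]
    have h1 := ih b hb
    have h2 := ih (b+1) (by linarith)
    have h3 : ∑ s ∈ Finset.range (r+1), (r.choose s : ℝ) * ((-1:ℝ)^(s+1) *
      (Real.Gamma ((n:ℝ) + (s+1:ℕ) + b + 1) / Real.Gamma (((s+1:ℕ):ℝ) + b + 1))) =
      - ∑ s ∈ Finset.range (r+1), (r.choose s : ℝ) * ((-1:ℝ)^s *
      (Real.Gamma ((n:ℝ) + s + (b+1) + 1) / Real.Gamma ((s:ℝ) + (b+1) + 1))) := by
      rw [← Finset.sum_neg_distrib]
      refine Finset.sum_congr rfl fun s _ => ?_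
      have e1 : (n:ℝ) + (s+1:ℕ) + b + 1 = (n:ℝ) + s + (b+1) + 1 := by push_cast; ring
      have e2 : ((s+1:ℕ):ℝ) + b + 1 = (s:ℝ) + (b+1) + 1 := by push_cast; ring
      rw [e1, e2]; ring
    rw [h3, h1, h2]
    have hr : (0:ℝ) ≤ r := Nat.cast_nonneg r
    have hn : (0:ℝ) ≤ n := Nat.cast_nonneg n
    have hG := Real.Gamma_pos_of_pos (show 0 < (r:ℝ) + b + 1 by linarith)
    have g1 : Real.Gamma ((n:ℝ) + (b+1) + 1) = ((n:ℝ)+b+1) * Real.Gamma ((n:ℝ)+b+1) := by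
      rw [← Real.Gamma_add_one (by linarith)]; congr 1; ring
    have g2 : Real.Gamma ((r:ℝ) + (b+1) + 1) = ((r:ℝ)+b+1) * Real.Gamma ((r:ℝ)+b+1) := by
      rw [← Real.Gamma_add_one (by linarith)]; congr 1; ring
    have g3 : Real.Gamma (((r+1:ℕ):ℝ) + b + 1) = ((r:ℝ)+b+1) * Real.Gamma ((r:ℝ)+b+1) := by
      rw [← Real.Gamma_add_one (by linarith)]; congr 1; push_cast; ring
    have hd : (n.descFactorial (r+1) : ℝ) = ((n:ℝ) - r) * n.descFactorial r := by
      rw [Nat.descFactorial_succ]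
      rcases le_total r n with h | h
      · push_cast [Nat.cast_sub h]; ring
      · rcases h.eq_or_lt with h | h
        · subst h; simp
        · simp [Nat.descFactorial_of_lt h]
    rw [g1, g2, g3, hd]
    have hne : (r:ℝ) + b + 1 ≠ 0 := by linarith
    have := hG.ne'
    field_simp
    ring

theorem stmt5 (a : ℝ) (ha : -1 < a) (n r : ℕ) (hrn : r ≤ n) :
    ∑ s ∈ Finset.range (r+1),
      (-1:ℝ)^s * Real.Gamma ((n:ℝ) + s + a + 1) /
        (Real.Gamma ((n:ℝ)+1) * Real.Gamma ((s:ℝ)+1) * Real.Gamma ((r:ℝ) - s + 1) *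
          Real.Gamma ((s:ℝ) + a + 1)) =
    (-1:ℝ)^r * Real.Gamma ((n:ℝ) + a + 1) /
      (Real.Gamma ((n:ℝ) - r + 1) * Real.Gamma ((r:ℝ) + a + 1) * Real.Gamma ((r:ℝ)+1)) := by
  have h := stmt5_aux n r a ha
  have hf : ∀ k : ℕ, (k.factorial : ℝ) ≠ 0 := fun k => by exact_mod_cast k.factorial_ne_zero
  have hpos : ∀ k : ℕ, Real.Gamma ((k:ℝ) + a + 1) ≠ 0 := fun k =>
    (Real.Gamma_pos_of_pos (by have : (0:ℝ) ≤ k := Nat.cast_nonneg k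
                               linarith)).ne'
  have hL : ∀ s ∈ Finset.range (r+1), (-1:ℝ)^s * Real.Gamma ((n:ℝ) + s + a + 1) /
        (Real.Gamma ((n:ℝ)+1) * Real.Gamma ((s:ℝ)+1) * Real.Gamma ((r:ℝ) - s + 1) *
          Real.Gamma ((s:ℝ) + a + 1)) = (1 / ((n.factorial : ℝ) * r.factorial)) *
      ((r.choose s : ℝ) * ((-1:ℝ)^s *
      (Real.Gamma ((n:ℝ) + s + a + 1) / Real.Gamma ((s:ℝ) + a + 1)))) := by
    intro s hs
    have hsr : s ≤ r := by simpa [Nat.lt_succ_iff] using hs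
    rw [← Nat.cast_sub hsr, Real.Gamma_nat_eq_factorial, Real.Gamma_nat_eq_factorial,
      Real.Gamma_nat_eq_factorial, Nat.cast_choose ℝ hsr]
    have := hpos s
    have := hf n
    have := hf r
    have := hf s
    have := hf (r - s)
    field_simp
  rw [Finset.sum_congr rfl hL, ← Finset.mul_sum, h, ← Nat.cast_sub hrn,
    Real.Gamma_nat_eq_factorial, Real.Gamma_nat_eq_factorial]
  have hd : (n.factorial : ℝ) = (n - r).factorial * n.descFactorial r := by
    exact_mod_cast (Nat.factorial_mul_descFactorial hrn).symm
  have h1 := hf n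
  rw [hd] at h1 ⊢
  have := hpos r
  have := hf r
  have := left_ne_zero_of_mul h1
  have := right_ne_zero_of_mul h1
  field_simp
end

section
/- Let a > −1 and b > −1 be real numbers, n a natural number, and x a real number. Then ∑_{r=0}^{n} ∑_{s=0}^{r} (−1)^s · Γ(n+s+a+1)·Γ(n+b+1) / (Γ(n+1)·Γ(s+1)·Γ(r−s+1)·Γ(s+a+1)·Γ(n−r+b+1)) · ((1−x)/2)^r · ((1+x)/2)^{n−r} = ∑_{r=0}^{n} (−1)^r · Γ(n+a+1)·Γ(n+b+1) / (Γ(n−r+1)·Γ(r+a+1)·Γ(r+1)·Γ(n−r+b+1)) · ((1−x)/2)^r · ((1+x)/2)^{n−r}. (That is, the explicit representation of the Jacobi biorthogonal polynomial P_n^{(α,a,b)}(x) at α = 1 coincides with the classical representation of the Jacobi orthogonal polynomial P_n^{(a,b)}(x).) -/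
open Real Finset

lemma pascal_aux (f : ℕ → ℝ) (r : ℕ) :
    ∑ s ∈ Finset.range (r+2), (-1:ℝ)^s * ((r+1).choose s) * f s =
    ∑ s ∈ Finset.range (r+1), (-1:ℝ)^s * (r.choose s) * f s -
    ∑ s ∈ Finset.range (r+1), (-1:ℝ)^s * (r.choose s) * f (s+1) := by
  have h : ∑ s ∈ Finset.range (r+1), (-1:ℝ)^s * (r.choose s) * f s =
      ∑ s ∈ Finset.range (r+2), (-1:ℝ)^s * (r.choose s) * f s := by
    rw [Finset.sum_range_succ _ (r+1)]; simp
  rw [h, Finset.sum_range_succ', Finset.sum_range_succ' _ (r+1), add_sub_right_comm,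
    ← Finset.sum_sub_distrib]
  congr 1
  · apply Finset.sum_congr rfl
    intro s _
    rw [Nat.choose_succ_succ]
    push_cast
    ring
  · simp

lemma diff_aux (n r : ℕ) : ∀ y : ℝ, 0 < y →
    ∑ s ∈ Finset.range (r+1), (-1:ℝ)^s * (r.choose s) * (Gamma (n + s + y) / Gamma (s + y)) =
      (-1:ℝ)^r * (n.descFactorial r) * (Gamma (n + y) / Gamma (r + y)) := by
  induction r with
  | zero => intro y hy; simp
  | succ r ih =>
    intro y hy
    rw [pascal_aux (fun s : ℕ => Gamma (n + s + y) / Gamma (s + y)), ih y hy]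
    have h2 := ih (y+1) (by linarith)
    have e : ∀ s : ℕ, Gamma ((n:ℝ) + ((s+1:ℕ):ℝ) + y) / Gamma (((s+1:ℕ):ℝ) + y)
        = Gamma (n + s + (y+1)) / Gamma (s + (y+1)) := by
      intro s
      push_cast
      congr 2 <;> ring
    simp only [e]
    rw [h2]
    have hr : (0:ℝ) < r + y := by positivity
    have hn : (0:ℝ) < n + y := by positivity
    have g1 : Gamma ((n:ℝ) + (y+1)) = (n+y) * Gamma (n+y) := by
      rw [← add_assoc, Gamma_add_one hn.ne']
    have g2 : Gamma ((r:ℝ) + (y+1)) = (r+y) * Gamma (r+y) := by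
      rw [← add_assoc, Gamma_add_one hr.ne']
    have g3 : Gamma (((r+1:ℕ):ℝ) + y) = (r+y) * Gamma (r+y) := by
      rw [← g2]; push_cast; congr 1; ring
    have hd : ((n.descFactorial (r+1) : ℕ) : ℝ) = (n - r) * n.descFactorial r := by
      rw [Nat.descFactorial_succ]
      rcases le_or_gt r n with h | h
      · push_cast [h]; ring
      · simp [Nat.descFactorial_of_lt h]
    have hG := (Gamma_pos_of_pos hr).ne'
    rw [g1, g2, g3, hd]
    field_simp
    ring

theorem stmt6 (a b : ℝ) (ha : -1 < a) (hb : -1 < b) (n : ℕ) (x : ℝ) :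
    ∑ r ∈ Finset.range (n+1), ∑ s ∈ Finset.range (r+1),
      (-1:ℝ)^s * Real.Gamma ((n:ℝ) + s + a + 1) * Real.Gamma ((n:ℝ) + b + 1) /
        (Real.Gamma ((n:ℝ)+1) * Real.Gamma ((s:ℝ)+1) * Real.Gamma ((r:ℝ) - s + 1) *
          Real.Gamma ((s:ℝ) + a + 1) * Real.Gamma ((n:ℝ) - r + b + 1)) *
      ((1-x)/2)^r * ((1+x)/2)^(n-r) =
    ∑ r ∈ Finset.range (n+1),
      (-1:ℝ)^r * Real.Gamma ((n:ℝ) + a + 1) * Real.Gamma ((n:ℝ) + b + 1) /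
        (Real.Gamma ((n:ℝ) - r + 1) * Real.Gamma ((r:ℝ) + a + 1) * Real.Gamma ((r:ℝ)+1) *
          Real.Gamma ((n:ℝ) - r + b + 1)) *
      ((1-x)/2)^r * ((1+x)/2)^(n-r) := by
  apply Finset.sum_congr rfl
  intro r hr
  have hrn : r ≤ n := by simpa [Nat.lt_succ_iff] using hr
  rw [← Finset.sum_mul, ← Finset.sum_mul]
  congr 2
  have hd := diff_aux n r (a+1) (by linarith)
  have hB : Gamma ((n:ℝ) - r + b + 1) ≠ 0 := by
    have : (r:ℝ) ≤ n := by exact_mod_cast hrn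
    exact (Gamma_pos_of_pos (by linarith)).ne'
  have hnr : Gamma ((n:ℝ) - r + 1) = ((n-r).factorial : ℝ) := by
    rw [← Nat.cast_sub hrn, Gamma_nat_eq_factorial]
  have hfac : (((n-r).factorial : ℕ):ℝ) * n.descFactorial r = n.factorial := by
    exact_mod_cast Nat.factorial_mul_descFactorial hrn
  have hf0 : ∀ m : ℕ, (m.factorial : ℝ) ≠ 0 := fun m => by exact_mod_cast m.factorial_ne_zero
  have hs : ∀ s ∈ Finset.range (r+1),
      (-1:ℝ)^s * Real.Gamma ((n:ℝ) + s + a + 1) * Real.Gamma ((n:ℝ) + b + 1) /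
        (Real.Gamma ((n:ℝ)+1) * Real.Gamma ((s:ℝ)+1) * Real.Gamma ((r:ℝ) - s + 1) *
          Real.Gamma ((s:ℝ) + a + 1) * Real.Gamma ((n:ℝ) - r + b + 1)) =
      ((-1:ℝ)^s * (r.choose s) * (Gamma (n + s + (a+1)) / Gamma (s + (a+1)))) *
        (Gamma ((n:ℝ) + b + 1) / (n.factorial * r.factorial * Gamma ((n:ℝ) - r + b + 1))) := by
    intro s hs
    have hsr : s ≤ r := by simpa [Nat.lt_succ_iff] using hs
    rw [← Nat.cast_sub hsr, Gamma_nat_eq_factorial, Gamma_nat_eq_factorial,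
      Gamma_nat_eq_factorial, Nat.cast_choose ℝ hsr, ← add_assoc, ← add_assoc]
    have hG : Gamma ((s:ℝ) + a + 1) ≠ 0 :=
      (Gamma_pos_of_pos (by have : (0:ℝ) ≤ s := s.cast_nonneg
                            linarith)).ne'
    have := hf0 n
    have := hf0 r
    have := hf0 s
    have := hf0 (r-s)
    field_simp
  rw [Finset.sum_congr rfl hs, ← Finset.sum_mul, hd, hnr, Gamma_nat_eq_factorial, ← hfac,
    ← add_assoc, ← add_assoc]
  have hG : Gamma ((r:ℝ) + a + 1) ≠ 0 :=
    (Gamma_pos_of_pos (by have : (0:ℝ) ≤ r := r.cast_nonneg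
                          linarith)).ne'
  have h1 := hf0 r
  have h2 := hf0 (n-r)
  have h3 : (n.descFactorial r : ℝ) ≠ 0 := by
    intro h; rw [h, mul_zero] at hfac; exact hf0 n hfac.symm
  field_simp
end

section
/- Fix a real α > 0, and define the complex-valued function ξ of a real variable by ξ(φ) := 1 − 2·Θ_{1/α}(φ)^α · exp(−i·(π−φ)/(1+1/α)) for φ ∈ (0, π). Then for every φ ∈ (0, π), ξ is differentiable at φ and its derivative ξ′(φ) is nonzero. -/
open Real Filter Set Topology

/-- `xi α φ = 1 − 2·Θ_{1/α}(φ)^α · exp(−i(π−φ)/(1+1/α))`. -/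
noncomputable def xi (α φ : ℝ) : ℂ :=
  1 - ((2 * (Th (1/α) φ) ^ α : ℝ) : ℂ) *
    Complex.exp (-Complex.I * (((Real.pi - φ) / (1 + 1/α) : ℝ) : ℂ))

theorem stmt7 (α : ℝ) (hα : 0 < α) :
    ∀ φ ∈ Set.Ioo 0 Real.pi, ∃ D : ℂ, HasDerivAt (xi α) D φ ∧ D ≠ 0 := by
  intro φ hφ
  obtain ⟨h0, h1⟩ := hφ
  have hc : 0 < 1 / α := by positivity
  have hc1 : 1 < 1 + 1 / α := by linarith
  set c : ℝ := 1 + 1 / α with hcdef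
  have hcpos : 0 < c := by linarith
  have hs1 : 0 < Real.sin φ := Real.sin_pos_of_pos_of_lt_pi h0 h1
  have hs2 : 0 < Real.sin ((Real.pi - φ) / c) := by
    apply Real.sin_pos_of_pos_of_lt_pi
    · exact div_pos (by linarith) hcpos
    · rw [div_lt_iff₀ hcpos]
      nlinarith [Real.pi_pos]
  have hTh : 0 < Th (1 / α) φ := by
    unfold Th
    rw [← hcdef]
    positivity
  have hθ : HasDerivAt (fun t : ℝ => (Real.pi - t) / c) (-1 / c) φ :=
    ((hasDerivAt_id φ).const_sub Real.pi).div_const c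
  have hdT : DifferentiableAt ℝ (Th (1 / α)) φ := by
    unfold Th
    rw [← hcdef]
    refine Real.differentiableAt_sin.div ?_ (by positivity)
    exact (hθ.sin.differentiableAt).const_mul c
  have hr : HasDerivAt (fun t : ℝ => 2 * (Th (1 / α) t) ^ α)
      (deriv (fun t : ℝ => 2 * (Th (1 / α) t) ^ α) φ) φ := by
    apply DifferentiableAt.hasDerivAt
    exact (hdT.rpow_const (Or.inl hTh.ne')).const_mul 2
  set r' := deriv (fun t : ℝ => 2 * (Th (1 / α) t) ^ α) φ
  have hrpos : 0 < 2 * (Th (1 / α) φ) ^ α := by positivity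
  have hE := (hθ.ofReal_comp.const_mul (-Complex.I)).cexp
  have hD := (hr.ofReal_comp.mul hE).const_sub 1
  refine ⟨_, hD, ?_⟩
  set r := 2 * (Th (1 / α) φ) ^ α with hrdef
  set E := Complex.exp (-Complex.I * (((Real.pi - φ) / c : ℝ) : ℂ)) with hEdef
  have hE0 : E ≠ 0 := Complex.exp_ne_zero _
  intro h
  have h2 : E * ((r' : ℂ) + ((r * (1 / c) : ℝ) : ℂ) * Complex.I) = 0 := by
    push_cast at h ⊢
    linear_combination -h
  have h3 := (mul_eq_zero.mp h2).resolve_left hE0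
  have h4 := congrArg Complex.im h3
  rw [Complex.add_im, Complex.im_ofReal_mul, Complex.ofReal_im, Complex.I_im, Complex.zero_im] at h4
  have : 0 < r * (1 / c) := by positivity
  linarith
end
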